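/- arXiv:2312.00368 — 3 statements merged into one kernel-verified Lean document; each statement's English description precedes it below -/
import Mathlib

section
/- If G is a graph on n vertices containing no path with k edges (P_k-free), then the number of edges of G is at most (k-1)n/2, with equality if and only if G is a disjoint union of complete graphs K_k. -/
/-!
Write `k = q + 1`. Strong induction on a vertex set `S` shows that the degrees of the induced
graph `G[S]` sum to at most `q * |S|`, and that equality forces `G[S]` to be a disjoint union of
copies of `K_{q+1}` (`sum_degIn_le`). The case `S = univ` and the handshake lemma give the theorem.

* If some `v ∈ S` has `2 * deg v ≤ q`, deleting it lowers the degree sum by at most `q`. In the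
  equality case the rest of `S` is a union of cliques `K_{q+1}`; an edge from `v` to one of them
  would give a path with `q + 1` edges (`not_adj_of_clique`), so `v` is isolated, `q = 0`, and `v` is
  itself a copy of `K_1`.
* Otherwise take a longest path in `G[S]`; it has at most `q + 1` vertices and contains all
  neighbours in `S` of both its ends, whose degrees add up to more than `q`. By pigeonhole two
  crossing chords from the ends turn the path into a cycle on the same vertex set `T`
  (`exists_cycle`). A neighbour outside `T` of a vertex of this cycle would give a longer path, so
  no edge of `G[S]` leaves `T` (`closed_of_cycle`). Since `|T| ≤ q + 1`, each degree on `T` is at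
  most `q`, and the set `T` can be removed; equality forces `T` to be a clique on `q + 1` vertices.

Paths are handled as lists of vertices, which are easy to cut, reverse and rotate.
-/

attribute [local instance] Classical.propDecidable

namespace ErdosGallai

variable {V : Type*}

/-- The degree of `x` in the subgraph of `G` induced on `S`, that is the number of neighbours of
`x` in `S`; `x` itself need not lie in `S`. -/
def degIn (G : SimpleGraph V) [DecidableRel G.Adj] (S : Finset V) (x : V) : ℕ :=
  (S.filter (G.Adj x)).card

/-- `l` is the vertex list of a path of `G` inside `S`. The empty list is allowed, and a path with
`m` edges has length `m + 1` as a list. -/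
structure IsPathList (G : SimpleGraph V) (S : Finset V) (l : List V) : Prop where
  chain : l.IsChain G.Adj
  nodup : l.Nodup
  mem : ∀ x ∈ l, x ∈ S

/-- The subgraph of `G` induced on `S` is a disjoint union of copies of `K_k`: every vertex of `S`
lies in a clique of `k` vertices of `S` that no edge inside `S` leaves. -/
def IsCliqueUnion (G : SimpleGraph V) (k : ℕ) (S : Finset V) : Prop :=
  ∀ v ∈ S, ∃ C ⊆ S, v ∈ C ∧ C.card = k ∧ (∀ x ∈ C, ∀ y ∈ C, x ≠ y → G.Adj x y) ∧
    ∀ x ∈ C, ∀ y ∈ S, G.Adj x y → y ∈ C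

variable {G : SimpleGraph V} {S : Finset V}

lemma IsPathList.cons {l : List V} (hl : IsPathList G S l) {y : V} (hy : y ∈ S) (hyl : y ∉ l)
    (h : ∀ x ∈ l.head?, G.Adj y x) : IsPathList G S (y :: l) :=
  ⟨List.isChain_cons.2 ⟨h, hl.chain⟩, List.nodup_cons.2 ⟨hyl, hl.nodup⟩, by
    simpa [hy] using hl.mem⟩

lemma IsPathList.reverse {l : List V} (hl : IsPathList G S l) : IsPathList G S l.reverse :=
  ⟨by
    rw [List.isChain_reverse]
    exact hl.chain.imp fun _ _ h => h.symm, List.nodup_reverse.2 hl.nodup, by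
    simpa using hl.mem⟩

lemma exists_longest [DecidableEq V] (hS : S.Nonempty) :
    ∃ l, IsPathList G S l ∧ l ≠ [] ∧ ∀ l', IsPathList G S l' → l'.length ≤ l.length := by
  obtain ⟨v, hv⟩ := hS
  have hb : BddAbove {n | ∃ l, IsPathList G S l ∧ l.length = n} := by
    refine ⟨S.card, ?_⟩
    rintro _ ⟨l, hl, rfl⟩
    rw [← List.toFinset_card_of_nodup hl.nodup]
    exact Finset.card_le_card fun x hx => hl.mem x (by simpa using hx)
  have h1 : 1 ∈ {n | ∃ l, IsPathList G S l ∧ l.length = n} :=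
    ⟨[v], ⟨by simp, by simp, by simpa using hv⟩, rfl⟩
  obtain ⟨l, hl, hn⟩ := Nat.sSup_mem ⟨1, h1⟩ hb
  refine ⟨l, hl, ?_, fun l' hl' => hn ▸ le_csSup hb ⟨l', hl', rfl⟩⟩
  rintro rfl
  have := le_csSup hb h1
  simp at hn
  omega

/-- If both ends of a path have all their neighbours on the path and their degrees sum to at least
the number of vertices of the path, then the vertices of the path can be reordered into a closed
cycle: a list `c` that is a chain and whose last vertex is adjacent to its first. -/
lemma exists_cycle [DecidableEq V] [DecidableRel G.Adj] {l : List V}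
    (hl : IsPathList G S l) (hne : l ≠ [])
    (h0 : ∀ y ∈ S, G.Adj (l.head hne) y → y ∈ l)
    (h1 : ∀ y ∈ S, G.Adj (l.getLast hne) y → y ∈ l)
    (hdeg : l.length ≤ degIn G S (l.head hne) + degIn G S (l.getLast hne)) :
    ∃ c : List V, c.Perm l ∧ c.IsChain G.Adj ∧ ∀ a ∈ c.getLast?, ∀ b ∈ c.head?, G.Adj a b := by
  obtain ⟨m, hm⟩ : ∃ m, l.length = m + 1 :=
    ⟨l.length - 1, by have := List.length_pos_iff.2 hne; omega⟩
  set x := l.head hne with hx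
  set z := l.getLast hne with hz
  set A := (Finset.range m).filter fun j => G.Adj x (l.getD (j + 1) x)
  set B := (Finset.range m).filter fun j => G.Adj z (l.getD j x)
  have hA : degIn G S x ≤ A.card := by
    refine le_trans (Finset.card_le_card ?_)
      (Finset.card_image_le (s := A) (f := fun j => l.getD (j + 1) x))
    intro y hy
    obtain ⟨hyS, hxy⟩ := Finset.mem_filter.1 hy
    obtain ⟨i, hi, rfl⟩ := List.getElem_of_mem (h0 y hyS hxy)
    cases i with
    | zero => simp [hx, List.head_eq_getElem] at hxy
    | succ j =>
      refine Finset.mem_image.2 ⟨j, Finset.mem_filter.2 ⟨?_, ?_⟩, ?_⟩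
      · simp; omega
      · simpa [hi] using hxy
      · simp [hi]
  have hB : degIn G S z ≤ B.card := by
    refine le_trans (Finset.card_le_card ?_)
      (Finset.card_image_le (s := B) (f := fun j => l.getD j x))
    intro y hy
    obtain ⟨hyS, hxy⟩ := Finset.mem_filter.1 hy
    obtain ⟨i, hi, rfl⟩ := List.getElem_of_mem (h1 y hyS hxy)
    have him : i ≠ m := by
      rintro rfl
      simp [hz, List.getLast_eq_getElem, hm] at hxy
    refine Finset.mem_image.2 ⟨i, Finset.mem_filter.2 ⟨?_, ?_⟩, ?_⟩
    · simp; omega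
    · simpa [hi] using hxy
    · simp [hi]
  -- `A` and `B` lie in a set of `m` indices, while their sizes add up to at least `m + 1`.
  have hAB : (A ∩ B).Nonempty := by
    rw [← Finset.card_pos]
    have h2 := Finset.card_union_add_card_inter A B
    have h3 : (A ∪ B).card ≤ m := by
      simpa using Finset.card_le_card
        (Finset.union_subset (Finset.filter_subset _ _) (Finset.filter_subset _ _) :
          A ∪ B ⊆ Finset.range m)
    omega
  obtain ⟨j, hj⟩ := hAB
  simp only [A, B, Finset.mem_inter, Finset.mem_filter, Finset.mem_range] at hj
  obtain ⟨⟨hjm, hj1⟩, -, hj2⟩ := hj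
  have e1 : j + 1 < l.length := by omega
  have e2 : j < l.length := by omega
  simp only [List.getD_eq_getElem?_getD, List.getElem?_eq_getElem e1,
    List.getElem?_eq_getElem e2, Option.getD_some] at hj1 hj2
  -- With the path `x₀ … x_m`, the cycle is `x_j … x₀ x_{j+1} … x_m`, closed by the edge `x_m x_j`.
  refine ⟨(l.take (j + 1)).reverse ++ l.drop (j + 1), ?_, ?_, ?_⟩
  · exact ((List.reverse_perm _).append_right _).trans (by rw [List.take_append_drop])
  · refine List.isChain_append.2 ⟨?_, hl.chain.drop _, ?_⟩
    · rw [List.isChain_reverse]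
      exact (hl.chain.take _).imp fun _ _ h => h.symm
    · intro a ha b hb
      have ha' : a = x := by
        simp [List.head?_take, List.head?_eq_some_head hne] at ha
        exact ha.symm
      have hb' : b = l[j + 1] := by
        simp [List.getElem?_eq_getElem e1] at hb
        exact hb.symm
      rw [ha', hb']; exact hj1
  · intro a ha b hb
    have ha' : a = z := by
      simp [List.getLast?_append, List.getLast?_drop, List.getLast?_eq_some_getLast hne,
        show ¬ l.length ≤ j + 1 by omega] at ha
      exact ha.symm
    have hb' : b = l[j] := by
      simp [List.head?_append, List.getLast?_take, List.getElem?_eq_getElem e2] at hb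
      exact hb.symm
    rw [ha', hb']; exact hj2

/-- If the vertices of a longest path carry a cycle `c`, then no edge inside `S` leaves the path:
such an edge, followed by the cycle opened at its endpoint, would be a longer path. -/
lemma closed_of_cycle {l c : List V} (hl : IsPathList G S l)
    (hmax : ∀ l', IsPathList G S l' → l'.length ≤ l.length)
    (hp : c.Perm l) (hc : c.IsChain G.Adj) (hcl : ∀ a ∈ c.getLast?, ∀ b ∈ c.head?, G.Adj a b)
    {x y : V} (hx : x ∈ l) (hy : y ∈ S) (hxy : G.Adj x y) : y ∈ l := by
  by_contra hyl
  obtain ⟨P, Q, rfl⟩ := List.append_of_mem (hp.mem_iff.2 hx)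
  have hp' : (x :: Q ++ P).Perm l := List.perm_append_comm.trans hp
  have hch : (x :: Q ++ P).IsChain G.Adj := by
    rw [List.isChain_append] at hc ⊢
    refine ⟨hc.2.1, hc.1, fun a ha b hb => hcl a ?_ b ?_⟩
    · rw [List.getLast?_append]; simp_all
    · rw [List.head?_append]; simp_all
  have hl' : IsPathList G S (x :: Q ++ P) :=
    ⟨hch, hp'.nodup_iff.2 hl.nodup, fun a ha => hl.mem a (hp'.mem_iff.1 ha)⟩
  have := hmax _ (hl'.cons hy (fun h => hyl (hp'.mem_iff.1 h)) (by simpa using hxy.symm))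
  have h2 := hp'.length_eq
  simp only [List.length_cons] at this h2
  omega

/-- A path with too many vertices has an initial segment with exactly `q + 2` vertices. -/
lemma length_le {q : ℕ} (hfree : ∀ l : List V, l.IsChain G.Adj → l.Nodup → l.length ≠ q + 2)
    {l : List V} (hl : IsPathList G S l) : l.length ≤ q + 1 := by
  by_contra h
  refine hfree (l.take (q + 2)) (hl.chain.take _) (hl.nodup.sublist (List.take_sublist _ _)) ?_
  rw [List.length_take]
  omega

variable [DecidableEq V]

/-- Deleting `v` removes its own degree and one from the degree of each of its neighbours. -/
lemma sum_degIn_erase [DecidableRel G.Adj] {v : V} (hv : v ∈ S) :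
    ∑ x ∈ S, degIn G S x = ∑ x ∈ S.erase v, degIn G (S.erase v) x + 2 * degIn G S v := by
  rw [← Finset.add_sum_erase _ _ hv]
  have h : ∀ x ∈ S.erase v, degIn G S x = degIn G (S.erase v) x + if G.Adj v x then 1 else 0 := by
    intro x hx
    unfold degIn
    conv_lhs => rw [← Finset.insert_erase hv]
    rw [Finset.filter_insert]
    by_cases hvx : G.Adj v x
    · rw [if_pos hvx.symm, if_pos hvx, Finset.card_insert_of_notMem (by simp)]
    · rw [if_neg (fun h => hvx h.symm), if_neg hvx, add_zero]
  rw [Finset.sum_congr rfl h, Finset.sum_add_distrib, ← Finset.card_filter]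
  have h2 : (S.erase v).filter (G.Adj v) = S.filter (G.Adj v) := by
    ext x
    simp only [Finset.mem_filter, Finset.mem_erase]
    exact ⟨fun h => ⟨h.1.2, h.2⟩, fun h => ⟨⟨h.2.ne', h.1⟩, h.2⟩⟩
  rw [h2]
  unfold degIn
  ring

lemma sum_degIn_sdiff [DecidableRel G.Adj] {T : Finset V} (hT : T ⊆ S)
    (hcl : ∀ x ∈ T, ∀ y ∈ S, G.Adj x y → y ∈ T) :
    ∑ x ∈ S, degIn G S x = ∑ x ∈ S \ T, degIn G (S \ T) x + ∑ x ∈ T, degIn G S x := by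
  rw [← Finset.sum_sdiff hT]
  congr 1
  refine Finset.sum_congr rfl fun x hx => ?_
  unfold degIn
  congr 1
  ext y
  simp only [Finset.mem_filter, Finset.mem_sdiff] at hx ⊢
  exact ⟨fun h => ⟨⟨h.1, fun hy => hx.2 (hcl y hy x hx.1 h.2.symm)⟩, h.2⟩,
    fun h => ⟨h.1.1, h.2⟩⟩

lemma IsCliqueUnion.of_sdiff {k : ℕ} {T : Finset V} (h : IsCliqueUnion G k (S \ T)) (hT : T ⊆ S)
    (hk : T.card = k) (hcliq : ∀ x ∈ T, ∀ y ∈ T, x ≠ y → G.Adj x y)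
    (hcl : ∀ x ∈ T, ∀ y ∈ S, G.Adj x y → y ∈ T) : IsCliqueUnion G k S := by
  intro v hv
  by_cases hvT : v ∈ T
  · exact ⟨T, hT, hvT, hk, hcliq, hcl⟩
  · obtain ⟨C, hC, hvC, hCk, h1, h2⟩ := h v (Finset.mem_sdiff.2 ⟨hv, hvT⟩)
    refine ⟨C, hC.trans Finset.sdiff_subset, hvC, hCk, h1, fun x hx y hy hxy => ?_⟩
    have hx' := Finset.mem_sdiff.1 (hC hx)
    exact h2 x hx y (Finset.mem_sdiff.2 ⟨hy, fun hyT => hx'.2 (hcl y hyT x hx'.1 hxy.symm)⟩) hxy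

/-- An outside neighbour of a vertex `u` of a clique on `q + 1` vertices would give a path on `q + 2`
vertices: enter the clique at `u` and traverse it. -/
lemma not_adj_of_clique {q : ℕ}
    (hfree : ∀ l : List V, l.IsChain G.Adj → l.Nodup → l.length ≠ q + 2) {C : Finset V}
    (hC : C.card = q + 1) (hcliq : ∀ x ∈ C, ∀ y ∈ C, x ≠ y → G.Adj x y) {u v : V} (hu : u ∈ C)
    (hv : v ∉ C) : ¬ G.Adj v u := by
  intro hvu
  have hpw : (u :: (C.erase u).toList).Pairwise G.Adj := by
    have hnd : (u :: (C.erase u).toList).Nodup := by simp [Finset.nodup_toList]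
    refine List.Pairwise.imp_of_mem ?_ hnd
    intro a b ha hb hab
    have hmem : ∀ w ∈ u :: (C.erase u).toList, w ∈ C := by
      intro w hw
      simp at hw
      rcases hw with rfl | hw
      exacts [hu, hw.2]
    exact hcliq a (hmem a ha) b (hmem b hb) hab
  refine hfree (v :: u :: (C.erase u).toList) ?_ ?_ ?_
  · exact List.isChain_cons.2 ⟨by simpa using hvu, hpw.isChain⟩
  · simp [Finset.nodup_toList, hv, hvu.ne]
  · simp [Finset.card_erase_of_mem hu, hC]

/-- The Erdős–Gallai bound with its equality case for the graph induced on `S`, as a statement about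
the degree sum, when no path has `q + 2` vertices. -/
theorem sum_degIn_le [DecidableRel G.Adj] {q : ℕ}
    (hfree : ∀ l : List V, l.IsChain G.Adj → l.Nodup → l.length ≠ q + 2) (S : Finset V) :
    ∑ x ∈ S, degIn G S x ≤ q * S.card ∧
      (∑ x ∈ S, degIn G S x = q * S.card → IsCliqueUnion G (q + 1) S) := by
  induction S using Finset.strongInduction with
  | H S ih =>
  rcases S.eq_empty_or_nonempty with rfl | hS
  · simp [IsCliqueUnion]
  by_cases hlow : ∃ v ∈ S, 2 * degIn G S v ≤ q
  · obtain ⟨v, hv, hdv⟩ := hlow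
    obtain ⟨ih1, ih2⟩ := ih _ (Finset.erase_ssubset hv)
    have hcard : q * S.card = q * (S.erase v).card + q := by
      rw [← Finset.card_erase_add_one hv]; ring
    rw [sum_degIn_erase hv, hcard]
    refine ⟨by omega, fun heq => ?_⟩
    have hU := ih2 (by omega)
    have hnadj : ∀ u ∈ S, ¬ G.Adj v u := by
      intro u hu hvu
      obtain ⟨C, hC, huC, hCk, h1, -⟩ := hU u (Finset.mem_erase.2 ⟨hvu.ne', hu⟩)
      exact not_adj_of_clique hfree hCk h1 huC (fun h => by simpa using hC h) hvu
    have hd0 : degIn G S v = 0 := by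
      unfold degIn
      rw [Finset.card_eq_zero, Finset.filter_eq_empty_iff]
      exact fun u hu => hnadj u hu
    have hq : q = 0 := by omega
    subst hq
    rw [← Finset.sdiff_singleton_eq_erase] at hU
    refine hU.of_sdiff (by simpa using hv) (by simp) (by simp) ?_
    intro x hx y hy hxy
    rw [Finset.mem_singleton] at hx
    subst hx
    exact absurd hxy (hnadj y hy)
  · push Not at hlow
    obtain ⟨l, hl, hne, hmax⟩ := exists_longest (G := G) hS
    have hlen := length_le hfree hl
    have hend : ∀ l' (hl' : IsPathList G S l') (hne' : l' ≠ []), l'.length = l.length →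
        ∀ y ∈ S, G.Adj (l'.head hne') y → y ∈ l' := by
      intro l' hl' hne' hll y hy hxy
      by_contra hyl
      have := hmax _ (hl'.cons hy hyl (by simpa [List.head?_eq_some_head hne'] using hxy.symm))
      simp at this
      omega
    have h0 := hend l hl hne rfl
    have h1 : ∀ y ∈ S, G.Adj (l.getLast hne) y → y ∈ l := by
      intro y hy hxy
      have hne' : l.reverse ≠ [] := by simpa using hne
      have := hend l.reverse hl.reverse hne' (by simp) y hy (by rwa [List.head_reverse hne'])
      simpa using this
    have hd0 := hlow _ (hl.mem _ (List.head_mem hne))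
    have hd1 := hlow _ (hl.mem _ (List.getLast_mem hne))
    obtain ⟨c, hp, hc, hcl⟩ := exists_cycle hl hne h0 h1 (by omega)
    set T := l.toFinset with hTdef
    have hTS : T ⊆ S := fun x hx => hl.mem x (by simpa [hTdef] using hx)
    have hTcl : ∀ x ∈ T, ∀ y ∈ S, G.Adj x y → y ∈ T := by
      intro x hx y hy hxy
      rw [hTdef, List.mem_toFinset] at hx ⊢
      exact closed_of_cycle hl hmax hp hc hcl hx hy hxy
    have hTne : T.Nonempty := by simpa [hTdef] using hne
    have hTcard : T.card ≤ q + 1 := by rwa [hTdef, List.toFinset_card_of_nodup hl.nodup]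
    have hsub : ∀ x ∈ T, S.filter (G.Adj x) ⊆ T.erase x := by
      intro x hx y hy
      obtain ⟨hyS, hxy⟩ := Finset.mem_filter.1 hy
      exact Finset.mem_erase.2 ⟨hxy.ne', hTcl x hx y hyS hxy⟩
    have hdeg : ∀ x ∈ T, degIn G S x ≤ q := by
      intro x hx
      have := Finset.card_le_card (hsub x hx)
      rw [Finset.card_erase_of_mem hx] at this
      unfold degIn
      omega
    have hsum : ∑ x ∈ T, degIn G S x ≤ q * T.card := by
      simpa [mul_comm] using Finset.sum_le_card_nsmul _ _ _ hdeg
    obtain ⟨ih1, ih2⟩ := ih _ (Finset.sdiff_ssubset hTS hTne)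
    have hcard : q * S.card = q * (S \ T).card + q * T.card := by
      rw [← Finset.card_sdiff_add_card_eq_card hTS]; ring
    rw [sum_degIn_sdiff hTS hTcl, hcard]
    refine ⟨by omega, fun heq => ?_⟩
    have hsum' : ∑ x ∈ T, degIn G S x = ∑ x ∈ T, q := by
      rw [Finset.sum_const, smul_eq_mul, mul_comm]
      omega
    have hall := (Finset.sum_eq_sum_iff_of_le hdeg).1 hsum'
    have hnb : ∀ x ∈ T, S.filter (G.Adj x) = T.erase x := by
      intro x hx
      refine Finset.eq_of_subset_of_card_le (hsub x hx) ?_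
      rw [Finset.card_erase_of_mem hx]
      have := hall x hx
      unfold degIn at this
      omega
    refine (ih2 (by omega)).of_sdiff hTS ?_ ?_ hTcl
    · obtain ⟨x, hx⟩ := hTne
      have h2 := hall x hx
      unfold degIn at h2
      rw [hnb x hx, Finset.card_erase_of_mem hx] at h2
      have := Finset.card_pos.2 ⟨x, hx⟩
      omega
    · intro x hx y hy hxy
      have : y ∈ S.filter (G.Adj x) := by
        rw [hnb x hx]
        exact Finset.mem_erase.2 ⟨hxy.symm, hy⟩
      exact (Finset.mem_filter.1 this).2

lemma IsCliqueUnion.components [Fintype V] {k : ℕ} (h : IsCliqueUnion G k Finset.univ) :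
    (∀ u w : V, G.Reachable u w → u ≠ w → G.Adj u w) ∧
      ∀ v : V, {w : V | G.Reachable v w}.ncard = k := by
  choose C hC using fun v => h v (Finset.mem_univ v)
  have hr : ∀ u w, G.Reachable u w → w ∈ C u := by
    intro u w huw
    rw [SimpleGraph.reachable_iff_reflTransGen] at huw
    induction huw with
    | refl => exact (hC u).2.1
    | tail _ hab ih => exact (hC u).2.2.2.2 _ ih _ (Finset.mem_univ _) hab
  have hadj : ∀ u w, w ∈ C u → u ≠ w → G.Adj u w :=
    fun u w hw hne => (hC u).2.2.2.1 u (hC u).2.1 w hw hne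
  refine ⟨fun u w huw => hadj u w (hr u w huw), fun v => ?_⟩
  have : {w : V | G.Reachable v w} = (C v : Set V) := by
    ext w
    refine ⟨hr v w, fun hw => ?_⟩
    by_cases hvw : v = w
    · subst hvw; exact SimpleGraph.Reachable.refl _
    · exact (hadj v w hw hvw).reachable
  rw [this, Set.ncard_coe_finset, (hC v).2.2.1]

lemma degree_of_components [Fintype V] [DecidableRel G.Adj] {q : ℕ}
    (h1 : ∀ u w : V, G.Reachable u w → u ≠ w → G.Adj u w)
    (h2 : ∀ v : V, {w : V | G.Reachable v w}.ncard = q + 1) (v : V) : G.degree v = q := by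
  have h : {w : V | G.Reachable v w} = ((insert v (G.neighborFinset v) : Finset V) : Set V) := by
    ext w
    simp only [Set.mem_ofPred_eq, Finset.coe_insert, Set.mem_insert_iff, Finset.mem_coe,
      SimpleGraph.mem_neighborFinset]
    refine ⟨fun hw => ?_, ?_⟩
    · by_cases hvw : w = v
      · exact Or.inl hvw
      · exact Or.inr (h1 v w hw (Ne.symm hvw))
    · rintro (rfl | hw)
      exacts [SimpleGraph.Reachable.refl _, hw.reachable]
  have h3 := h2 v
  rw [h, Set.ncard_coe_finset, Finset.card_insert_of_notMem (by simp),
    SimpleGraph.card_neighborFinset_eq_degree] at h3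
  omega

end ErdosGallai
attribute [local instance] Classical.propDecidable

/-- Erdős–Gallai theorem: if `G` contains no path with `k` edges, then
`e(G) ≤ (k-1)·n/2`, with equality iff `G` is a disjoint union of complete
graphs `K_k` (every connected component is a complete graph on `k` vertices). -/
theorem erdos_gallai_path {V : Type*} [Fintype V] [DecidableEq V]
    (G : SimpleGraph V) [DecidableRel G.Adj] (k : ℕ) (hk : 1 ≤ k)
    (hfree : ¬ ∃ (u w : V) (p : G.Walk u w), p.IsPath ∧ p.length = k) :
    (G.edgeFinset.card : ℝ) ≤ ((k : ℝ) - 1) * (Fintype.card V) / 2 ∧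
    ((G.edgeFinset.card : ℝ) = ((k : ℝ) - 1) * (Fintype.card V) / 2 ↔
      ((∀ u w : V, G.Reachable u w → u ≠ w → G.Adj u w) ∧
        ∀ v : V, {w : V | G.Reachable v w}.ncard = k)) := by
  obtain ⟨q, rfl⟩ : ∃ q, k = q + 1 := ⟨k - 1, by omega⟩
  have hfree' : ∀ l : List V, l.IsChain G.Adj → l.Nodup → l.length ≠ q + 2 := by
    intro l hc hn hlen
    have hne : l ≠ [] := by rintro rfl; simp at hlen
    refine hfree ⟨_, _, SimpleGraph.Walk.ofSupport l hne hc, ?_, ?_⟩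
    · rw [SimpleGraph.Walk.isPath_def, SimpleGraph.Walk.support_ofSupport]
      exact hn
    · rw [SimpleGraph.Walk.length_ofSupport, hlen]
      rfl
  obtain ⟨hle, heq⟩ := ErdosGallai.sum_degIn_le hfree' Finset.univ
  have hdeg : ∀ v, ErdosGallai.degIn G Finset.univ v = G.degree v := by
    intro v
    rw [ErdosGallai.degIn, ← SimpleGraph.card_neighborFinset_eq_degree,
      SimpleGraph.neighborFinset_eq_filter]
  simp only [hdeg, SimpleGraph.sum_degrees_eq_twice_card_edges, Finset.card_univ] at hle heq
  have hcast : (G.edgeFinset.card : ℝ) = (((q + 1 : ℕ) : ℝ) - 1) * (Fintype.card V) / 2 ↔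
      2 * G.edgeFinset.card = q * Fintype.card V := by
    rw [← @Nat.cast_inj ℝ]
    push_cast
    constructor <;> intro h <;> linarith
  refine ⟨?_, hcast.trans ⟨fun h => (heq h).components, fun ⟨h1, h2⟩ => ?_⟩⟩
  · have : (2 : ℝ) * G.edgeFinset.card ≤ q * Fintype.card V := by exact_mod_cast hle
    push_cast
    linarith
  · rw [← SimpleGraph.sum_degrees_eq_twice_card_edges]
    simp [ErdosGallai.degree_of_components h1 h2, mul_comm]
end

section
/- Let H be a connected linear 3-uniform hypergraph on n vertices that contains no Berge cycle of length l, where l ≥ 5. Fix a vertex u and let N_u be its neighborhood and e_1(N_u) the number of edges of H intersecting N_u in exactly one vertex. Then e_1(N_u) ≤ (2l-7)(n - 2d_u - 1)/2, where d_u is the degree of u. -/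
/-!
Let `N` be the neighbourhood of `u` and `W` the complement of `N ∪ {u}`; linearity gives
`|W| = n - 2 d_u - 1`. An edge `e` meeting `N` in exactly one vertex avoids `u`, so it is a pair in
`W` together with one vertex of `N`, its colour. This makes `W` a graph with `e_1(N)` edges, and
linearity makes distinct hyperedges give distinct pairs and the colouring proper.

If the bound failed, this graph would have average degree above `2l - 7`. A minimal vertex set `S`
with this property has minimum degree at least `l - 3` and a vertex of degree at least `2l - 6`
(`exists_dense_core`). Growing greedily from that vertex gives a path `a_0, …, a_{l-4}` in `S`
(`exists_path`). The last vertex lies on an edge `f₂` that is not the last path edge; its colour `y`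
is joined to `u` by an edge `g₂`. Since `2l - 6 ≥ 4`, the vertex `a_0` lies on an edge `f₁` other
than the first path edge whose colour `x` is not one of the two vertices of `g₂ \ {u}`. With
`g₁ ∋ u, x` the cycle `u, x, a_0, …, a_{l-4}, y` is a Berge cycle of length `l`
(`not_free_of_path`).
-/

attribute [local instance] Classical.propDecidable

/-- The degree of a vertex. -/
def hDeg {V : Type*} [DecidableEq V] (E : Finset (Finset V)) (v : V) : ℕ :=
  (E.filter (fun e => v ∈ e)).card

/-- The neighbourhood of `v`. -/
def hNbhd {V : Type*} [Fintype V] [DecidableEq V] (E : Finset (Finset V)) (v : V) :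
    Finset V :=
  Finset.univ.filter (fun w => w ≠ v ∧ ∃ e ∈ E, v ∈ e ∧ w ∈ e)

/-- `e_i(S)`: the number of edges meeting `S` in exactly `i` vertices. -/
def eCount {V : Type*} [DecidableEq V] (E : Finset (Finset V)) (S : Finset V) (i : ℕ) : ℕ :=
  (E.filter (fun e => (e ∩ S).card = i)).card

/-- `H` contains no Berge cycle of length `l`: there are no `l` distinct vertices
and `l` distinct edges with `{v_i, v_{i+1}} ⊆ e_i` cyclically. -/
def BergeCycleFree {V : Type*} (E : Finset (Finset V)) (l : ℕ) : Prop :=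
  ¬ ∃ (v : Fin l → V) (e : Fin l → Finset V),
      Function.Injective v ∧ Function.Injective e ∧
      ∀ i : Fin l, e i ∈ E ∧ v i ∈ e i ∧ v ⟨(i.val + 1) % l, Nat.mod_lt _ i.pos⟩ ∈ e i

/-! ### A dense subgraph -/

/-- The members of `F` whose trace on `W` lies in `S`: the subgraph induced by `S`. -/
def inducedOn {V : Type*} [DecidableEq V] (F : Finset (Finset V)) (W S : Finset V) :
    Finset (Finset V) :=
  F.filter (fun e => e ∩ W ⊆ S)

/-- A subset `S` of `W`, minimal among those of average degree exceeding `2l - 7`, has minimum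
degree at least `l - 3` and maximum degree at least `2l - 6`. -/
lemma exists_dense_core {V : Type*} [DecidableEq V]
    (F : Finset (Finset V)) (W : Finset V) (l : ℕ) (hl : 5 ≤ l)
    (hF : ∀ e ∈ F, (e ∩ W).card = 2)
    (hbig : (2 * l - 7) * W.card < 2 * F.card) :
    ∃ S ⊆ W, (∀ v ∈ S, l - 3 ≤ hDeg (inducedOn F W S) v) ∧
      ∃ v ∈ S, 2 * l - 6 ≤ hDeg (inducedOn F W S) v := by
  let P : Finset V → Prop := fun S =>
    S ⊆ W ∧ (2 * l - 7) * S.card < 2 * (inducedOn F W S).card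
  have hPW : P W := by
    refine ⟨subset_rfl, ?_⟩
    have : inducedOn F W W = F := by
      unfold inducedOn
      exact Finset.filter_true_of_mem (fun e _ => Finset.inter_subset_right)
    rw [this]; exact hbig
  obtain ⟨S, hS, hmin⟩ := exists_minimalFor_of_wellFoundedLT P Finset.card ⟨W, hPW⟩
  obtain ⟨hSW, hSd⟩ := hS
  refine ⟨S, hSW, ?_, ?_⟩
  · intro v hv
    have hcard := Finset.card_erase_add_one hv
    have hnP : ¬ P (S.erase v) := by
      intro h
      have := hmin h (by omega)
      omega
    have hle : 2 * (inducedOn F W (S.erase v)).card ≤ (2 * l - 7) * (S.erase v).card := by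
      by_contra h
      exact hnP ⟨(Finset.erase_subset _ _).trans hSW, by omega⟩
    have hsplit : (inducedOn F W S).card
        ≤ (inducedOn F W (S.erase v)).card + hDeg (inducedOn F W S) v := by
      unfold hDeg
      refine (Finset.card_le_card ?_).trans (Finset.card_union_le _ _)
      intro e he
      by_cases hve : v ∈ e
      · exact Finset.mem_union_right _ (Finset.mem_filter.2 ⟨he, hve⟩)
      · refine Finset.mem_union_left _ ?_
        unfold inducedOn at he ⊢
        rw [Finset.mem_filter] at he ⊢
        refine ⟨he.1, fun x hx => Finset.mem_erase.2 ⟨?_, he.2 hx⟩⟩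
        rintro rfl
        exact hve (Finset.mem_inter.1 hx).1
    rw [← hcard, mul_add, mul_one] at hSd
    omega
  · by_contra! hcon
    have hsum : ∑ v ∈ S, hDeg (inducedOn F W S) v = ∑ e ∈ inducedOn F W S, 2 := by
      unfold hDeg
      refine (Finset.sum_card_bipartiteAbove_eq_sum_card_bipartiteBelow
        (fun (v : V) (e : Finset V) => v ∈ e)).trans ?_
      refine Finset.sum_congr rfl fun e he => ?_
      unfold inducedOn at he
      rw [Finset.mem_filter] at he
      rw [← hF e he.1]
      congr 1
      ext x
      simp only [Finset.bipartiteBelow, Finset.mem_filter, Finset.mem_inter]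
      exact ⟨fun h => ⟨h.2, hSW h.1⟩, fun h => ⟨he.2 (Finset.mem_inter.2 h), h.1⟩⟩
    have hle : ∑ v ∈ S, hDeg (inducedOn F W S) v ≤ S.card • (2 * l - 7) :=
      Finset.sum_le_card_nsmul _ _ _ fun v hv => by
        have := hcon v hv
        omega
    rw [hsum, Finset.sum_const, smul_eq_mul, smul_eq_mul] at hle
    rw [mul_comm] at hSd
    omega

/-! ### Paths in a linear family -/

/-- Two members of a linear family with two common vertices coincide. -/
lemma eq_of_linear {V : Type*} [DecidableEq V] {E : Finset (Finset V)}
    (hlin : ∀ e ∈ E, ∀ f ∈ E, e ≠ f → (e ∩ f).card ≤ 1)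
    {e f : Finset V} (he : e ∈ E) (hf : f ∈ E) {x y : V} (hxy : x ≠ y)
    (hxe : x ∈ e) (hye : y ∈ e) (hxf : x ∈ f) (hyf : y ∈ f) : e = f := by
  by_contra h
  exact hxy (Finset.card_le_one.1 (hlin e he f hf h) x (Finset.mem_inter.2 ⟨hxe, hxf⟩) y
    (Finset.mem_inter.2 ⟨hye, hyf⟩))

/-- Greedy construction of a path on `j` vertices starting at `v`, inside a set of minimum degree at
least `j - 1`. Values of `a` and `p` beyond the path are irrelevant. -/
lemma exists_path {V : Type*} [DecidableEq V] (G : Finset (Finset V)) (S : Finset V) (k : ℕ)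
    (hlin : ∀ e ∈ G, ∀ f ∈ G, e ≠ f → (e ∩ f).card ≤ 1)
    (hG : ∀ e ∈ G, (e ∩ S).card = 2)
    (hdeg : ∀ v ∈ S, k ≤ hDeg G v) (v : V) (hv : v ∈ S) (j : ℕ) (hj : 1 ≤ j) (hjk : j ≤ k + 1) :
    ∃ (a : ℕ → V) (p : ℕ → Finset V), a 0 = v ∧ (∀ i < j, a i ∈ S) ∧
      (∀ i < j, ∀ i' < j, a i = a i' → i = i') ∧
      ∀ i, i + 1 < j → p i ∈ G ∧ a i ∈ p i ∧ a (i + 1) ∈ p i := by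
  induction j, hj using Nat.le_induction with
  | base =>
    exact ⟨fun _ => v, fun _ => ∅, rfl, fun _ _ => hv, fun i hi i' hi' _ => by omega,
      fun i hi => by omega⟩
  | succ j hj ih =>
    obtain ⟨a, p, h0, hS, hinj, hp⟩ := ih (by omega)
    have hwS : a (j - 1) ∈ S := hS _ (by omega)
    have hother : ∀ e ∈ G.filter (fun e => a (j - 1) ∈ e), ∃ x ∈ S, x ∈ e ∧ x ≠ a (j - 1) := by
      intro e he
      rw [Finset.mem_filter] at he
      obtain ⟨x, hx, hne⟩ := Finset.exists_mem_ne (s := e ∩ S) (by rw [hG e he.1]; omega)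
        (a (j - 1))
      rw [Finset.mem_inter] at hx
      exact ⟨x, hx.2, hx.1, hne⟩
    have : Nonempty V := ⟨v⟩
    choose! o hoS hoe hone using hother
    have hoinj : Set.InjOn o (↑(G.filter (fun e => a (j - 1) ∈ e)) : Set (Finset V)) := by
      intro e he f hf hef
      have he' := Finset.mem_filter.1 (Finset.mem_coe.1 he)
      have hf' := Finset.mem_filter.1 (Finset.mem_coe.1 hf)
      exact eq_of_linear hlin he'.1 hf'.1 (hone e he) (hoe e he) he'.2
        (by rw [hef]; exact hoe f hf) hf'.2
    have hlt : ((Finset.range (j - 1)).image a).card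
        < ((G.filter (fun e => a (j - 1) ∈ e)).image o).card := by
      rw [Finset.card_image_of_injOn hoinj]
      have h1 := hdeg _ hwS
      have h2 : ((Finset.range (j - 1)).image a).card ≤ j - 1 := by
        simpa using Finset.card_image_le (s := Finset.range (j - 1)) (f := a)
      unfold hDeg at h1
      omega
    obtain ⟨w, hw, hwn⟩ := Finset.exists_mem_notMem_of_card_lt_card hlt
    obtain ⟨e, he, rfl⟩ := Finset.mem_image.1 hw
    have hnew : ∀ i < j, a i ≠ o e := by
      intro i hi h
      by_cases hij : i = j - 1
      · subst hij
        exact hone e he h.symm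
      · exact hwn (Finset.mem_image.2 ⟨i, Finset.mem_range.2 (by omega), h⟩)
    have he' := Finset.mem_filter.1 he
    refine ⟨fun i => if i < j then a i else o e, fun i => if i + 1 < j then p i else e,
      ?_, ?_, ?_, ?_⟩
    · simp only [if_pos (show 0 < j by omega), h0]
    · intro i _
      dsimp only
      split_ifs with h
      exacts [hS i h, hoS e he]
    · intro i hi i' hi' h
      dsimp only at h
      split_ifs at h with h1 h2 h2
      · exact hinj i h1 i' h2 h
      · exact absurd h (hnew i h1)
      · exact absurd h.symm (hnew i' h2)
      · omega
    · intro i hi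
      dsimp only
      by_cases h : i + 1 < j
      · simp only [if_pos h, if_pos (show i < j by omega)]
        exact hp i h
      · have hij : i = j - 1 := by omega
        simp only [if_neg h, if_pos (show i < j by omega)]
        refine ⟨he'.1, ?_, hoe e he⟩
        rw [hij]
        exact he'.2

/-! ### Closing a path to a Berge cycle -/

/-- A path `a_0, …, a_{k-1}` closes up, through the edges `f₁, g₁, g₂, f₂` and the vertices
`x, u, y`, to a Berge cycle of length `k + 3`. -/
lemma not_free_of_path {V : Type*} [DecidableEq V] (E : Finset (Finset V)) (k : ℕ) (hk : 1 ≤ k)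
    (u x y : V) (f₁ f₂ g₁ g₂ : Finset V) (a : ℕ → V) (p : ℕ → Finset V)
    (hux : u ≠ x) (huy : u ≠ y) (hxy : x ≠ y)
    (hua : ∀ i < k, a i ≠ u) (hxa : ∀ i < k, a i ≠ x) (hya : ∀ i < k, a i ≠ y)
    (hinj : ∀ i < k, ∀ i' < k, a i = a i' → i = i')
    (hf₁ : f₁ ∈ E ∧ x ∈ f₁ ∧ a 0 ∈ f₁) (hf₂ : f₂ ∈ E ∧ a (k - 1) ∈ f₂ ∧ y ∈ f₂)
    (hg₁ : g₁ ∈ E ∧ u ∈ g₁ ∧ x ∈ g₁) (hg₂ : g₂ ∈ E ∧ y ∈ g₂ ∧ u ∈ g₂)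
    (hp : ∀ i, i + 1 < k → p i ∈ E ∧ a i ∈ p i ∧ a (i + 1) ∈ p i)
    (huf₁ : u ∉ f₁) (huf₂ : u ∉ f₂) (hup : ∀ i, i + 1 < k → u ∉ p i)
    (hg : g₁ ≠ g₂) (hf : f₁ ≠ f₂)
    (hpf₁ : ∀ i, i + 1 < k → p i ≠ f₁) (hpf₂ : ∀ i, i + 1 < k → p i ≠ f₂)
    (hpp : ∀ i, i + 1 < k → ∀ i', i' + 1 < k → p i = p i' → i = i') :
    ¬ BergeCycleFree E (k + 3) := by
  unfold BergeCycleFree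
  rw [not_not]
  let v : ℕ → V := fun i =>
    if i = 0 then u else if i = 1 then x else if i = k + 2 then y else a (i - 2)
  let e : ℕ → Finset V := fun i =>
    if i = 0 then g₁ else if i = 1 then f₁ else if i = k + 2 then g₂ else
      if i = k + 1 then f₂ else p (i - 2)
  have hv0 : v 0 = u := rfl
  have hv1 : v 1 = x := rfl
  have hvl : v (k + 2) = y := by simp [v]
  have hva : ∀ i < k, v (i + 2) = a i := fun i hi => by
    simp [v, show i ≠ k by omega]
  have he0 : e 0 = g₁ := rfl
  have he1 : e 1 = f₁ := rfl
  have hel : e (k + 2) = g₂ := by simp [e]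
  have hef : e (k + 1) = f₂ := by simp [e, show k ≠ 0 by omega]
  have hep : ∀ i, i + 1 < k → e (i + 2) = p i := fun i hi => by
    simp [e, show i ≠ k by omega, show i + 1 ≠ k by omega]
  have casesv : ∀ i < k + 3, i = 0 ∨ i = 1 ∨ i = k + 2 ∨ ∃ t < k, i = t + 2 := by
    intro i hi
    by_cases h : i = 0 ∨ i = 1 ∨ i = k + 2
    · tauto
    · exact Or.inr (Or.inr (Or.inr ⟨i - 2, by omega, by omega⟩))
  have casese : ∀ i < k + 3, i = 0 ∨ i = 1 ∨ i = k + 2 ∨ i = k + 1 ∨ ∃ t, t + 1 < k ∧ i = t + 2 := by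
    intro i hi
    by_cases h : i = 0 ∨ i = 1 ∨ i = k + 2 ∨ i = k + 1
    · tauto
    · exact Or.inr (Or.inr (Or.inr (Or.inr ⟨i - 2, by omega, by omega⟩)))
  have hgf : ∀ g f : Finset V, u ∈ g → u ∉ f → g ≠ f := by
    rintro g f h h' rfl
    exact h' h
  refine ⟨fun i => v i, fun i => e i, ?_, ?_, ?_⟩
  · rintro ⟨i, hi⟩ ⟨j, hj⟩ h
    dsimp only at h
    rw [Fin.mk.injEq]
    rcases casesv i hi with rfl | rfl | rfl | ⟨t, ht, rfl⟩ <;>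
    rcases casesv j hj with rfl | rfl | rfl | ⟨s, hs, rfl⟩ <;>
    (try simp only [hv0, hv1, hvl] at h) <;> grind
  · rintro ⟨i, hi⟩ ⟨j, hj⟩ h
    dsimp only at h
    rw [Fin.mk.injEq]
    rcases casese i hi with rfl | rfl | rfl | rfl | ⟨t, ht, rfl⟩ <;>
    rcases casese j hj with rfl | rfl | rfl | rfl | ⟨s, hs, rfl⟩ <;>
    (try simp only [he0, he1, hel, hef] at h) <;> grind
  · rintro ⟨i, hi⟩
    dsimp only
    by_cases hlast : i = k + 2
    · subst hlast
      rw [show (k + 2 + 1) % (k + 3) = 0 from Nat.mod_self _, hel, hvl, hv0]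
      exact hg₂
    · rw [Nat.mod_eq_of_lt (show i + 1 < k + 3 by omega)]
      rcases casese i hi with rfl | rfl | rfl | rfl | ⟨t, ht, rfl⟩
      · exact hg₁
      · rw [he1, hv1, hva 0 (by omega)]
        exact hf₁
      · omega
      · rw [hef, show v (k + 1) = a (k - 1) by
          have := hva (k - 1) (by omega)
          rwa [show k - 1 + 2 = k + 1 by omega] at this, hvl]
        exact hf₂
      · rw [hep t ht, hva t (by omega), show t + 2 + 1 = t + 1 + 2 by omega, hva (t + 1) ht]
        exact hp t ht

/-! ### The neighbourhood and the bound -/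

/-- In a linear 3-uniform hypergraph, `|N_u| = 2 d_u`. -/
lemma card_hNbhd {V : Type*} [Fintype V] [DecidableEq V] (E : Finset (Finset V))
    (hunif : ∀ e ∈ E, e.card = 3)
    (hlin : ∀ e ∈ E, ∀ f ∈ E, e ≠ f → (e ∩ f).card ≤ 1) (u : V) :
    (hNbhd E u).card = 2 * hDeg E u := by
  have h : hNbhd E u = (E.filter (fun e => u ∈ e)).biUnion (fun e => e.erase u) := by
    ext w
    simp only [hNbhd, Finset.mem_filter, Finset.mem_univ, true_and, Finset.mem_biUnion,
      Finset.mem_erase]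
    constructor
    · rintro ⟨hw, e, he, hu, hwe⟩
      exact ⟨e, ⟨he, hu⟩, hw, hwe⟩
    · rintro ⟨e, ⟨he, hu⟩, hw, hwe⟩
      exact ⟨hw, e, he, hu, hwe⟩
  rw [h, Finset.card_biUnion, hDeg, mul_comm]
  · refine Finset.sum_const_nat fun e he => ?_
    rw [Finset.mem_filter] at he
    rw [Finset.card_erase_of_mem he.2, hunif e he.1]
  · intro e he f hf hef
    rw [Finset.mem_coe, Finset.mem_filter] at he hf
    refine Finset.disjoint_left.2 fun x hxe hxf => hef ?_
    rw [Finset.mem_erase] at hxe hxf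
    exact eq_of_linear hlin he.1 hf.1 hxe.1 hxe.2 he.2 hxf.2 hf.2

/-- In a connected linear 3-uniform Berge-`C_l`-free hypergraph (`l ≥ 5`),
`e_1(N_u) ≤ (2l-7)(n - 2d_u - 1)/2`. -/
theorem eOne_bound {V : Type*} [Fintype V] [DecidableEq V]
    (E : Finset (Finset V)) (l : ℕ) (hl : 5 ≤ l)
    (hunif : ∀ e ∈ E, e.card = 3)
    (hlin : ∀ e ∈ E, ∀ f ∈ E, e ≠ f → (e ∩ f).card ≤ 1)
    (hconn : ∀ u v : V, Relation.ReflTransGen (fun a b => ∃ e ∈ E, a ∈ e ∧ b ∈ e) u v)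
    (hfree : BergeCycleFree E l) (u : V) :
    (eCount E (hNbhd E u) 1 : ℝ)
      ≤ (2 * (l : ℝ) - 7) * ((Fintype.card V : ℝ) - 2 * (hDeg E u : ℝ) - 1) / 2 := by
  set N := hNbhd E u with hN
  set F := E.filter (fun e => (e ∩ N).card = 1) with hFdef
  set W : Finset V := (insert u N)ᶜ with hW
  have hmemN : ∀ w, w ∈ N ↔ w ≠ u ∧ ∃ e ∈ E, u ∈ e ∧ w ∈ e := fun w => by
    simp [hN, hNbhd]
  have huN : u ∉ N := fun h => ((hmemN u).1 h).1 rfl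
  have hFE : ∀ e ∈ F, e ∈ E := fun e he => (Finset.mem_filter.1 he).1
  have huF : ∀ e ∈ F, u ∉ e := by
    intro e he hu
    have hsub : e.erase u ⊆ e ∩ N := fun w hw => by
      rw [Finset.mem_erase] at hw
      exact Finset.mem_inter.2 ⟨hw.2, (hmemN w).2 ⟨hw.1, e, hFE e he, hu, hw.2⟩⟩
    have := Finset.card_le_card hsub
    rw [Finset.card_erase_of_mem hu, hunif e (hFE e he), (Finset.mem_filter.1 he).2] at this
    omega
  have hFW : ∀ e ∈ F, (e ∩ W).card = 2 := by
    intro e he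
    have h1 : e ∩ W = e \ N := by
      ext w
      have : w ∈ e → w ≠ u := fun h h' => huF e he (h' ▸ h)
      simp only [hW, Finset.mem_inter, Finset.mem_compl, Finset.mem_insert, Finset.mem_sdiff]
      tauto
    have h2 := Finset.card_sdiff_add_card_inter e N
    rw [(Finset.mem_filter.1 he).2, hunif e (hFE e he)] at h2
    rw [h1]
    omega
  have hWcard : W.card + 2 * hDeg E u + 1 = Fintype.card V := by
    rw [← card_hNbhd E hunif hlin u, ← hN, add_assoc, ← Finset.card_insert_of_notMem huN, hW]
    exact Finset.card_compl_add_card _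
  have hmain : 2 * F.card ≤ (2 * l - 7) * W.card := by
    by_contra! hbig
    obtain ⟨S, hSW, hmin, v, hvS, hvdeg⟩ := exists_dense_core F W l hl hFW hbig
    set G := inducedOn F W S with hGdef
    have hGF : ∀ e ∈ G, e ∈ F := fun e he => (Finset.mem_filter.1 he).1
    have hGS : ∀ e ∈ G, (e ∩ S).card = 2 := by
      intro e he
      rw [← hFW e (hGF e he)]
      congr 1
      refine (Finset.inter_subset_inter_left hSW).antisymm fun x hx => ?_
      exact Finset.mem_inter.2 ⟨(Finset.mem_inter.1 hx).1, (Finset.mem_filter.1 he).2 hx⟩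
    have hGlin : ∀ e ∈ G, ∀ f ∈ G, e ≠ f → (e ∩ f).card ≤ 1 := fun e he f hf =>
      hlin e (hFE e (hGF e he)) f (hFE f (hGF f hf))
    have hSu : ∀ w ∈ S, w ≠ u ∧ w ∉ N := fun w hw => by
      have := hSW hw
      simpa [hW] using this
    have hcolour : ∀ e ∈ F, ∃ x, e ∩ N = {x} := fun e he =>
      Finset.card_eq_one.1 (Finset.mem_filter.1 he).2
    obtain ⟨k, rfl⟩ : ∃ k, l = k + 3 := ⟨l - 3, by omega⟩
    obtain ⟨a, p, ha0, haS, hinj, hp⟩ := exists_path G S k hGlin hGS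
      (fun w hw => by simpa using hmin w hw) v hvS k (by omega) (by omega)
    have hpair : ∀ e ∈ G, ∀ x ∈ e, ∀ y ∈ e, ∀ z ∈ e, x ∈ S → y ∈ S → z ∈ S →
        x ≠ y → z = x ∨ z = y := by
      intro e he x hx y hy z hz hxS hyS hzS hxy
      by_contra! h
      have : ({x, y, z} : Finset V) ⊆ e ∩ S := by
        intro w hw
        simp only [Finset.mem_insert, Finset.mem_singleton] at hw
        rcases hw with rfl | rfl | rfl <;> simp [*]
      have := Finset.card_le_card this
      rw [hGS e he, Finset.card_eq_three.2 ⟨x, y, z, hxy, h.1.symm, h.2.symm, rfl⟩] at this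
      omega
    have hpidx : ∀ i, i + 1 < k → ∀ j < k, a j ∈ p i → j = i ∨ j = i + 1 := by
      intro i hi j hj hmem
      obtain ⟨h1, h2, h3⟩ := hp i hi
      rcases hpair _ h1 _ h2 _ h3 _ hmem (haS i (by omega)) (haS _ hi) (haS j hj)
        (fun h => by have := hinj _ (by omega) _ hi h; omega) with h | h
      · exact Or.inl (hinj _ hj _ (by omega) h)
      · exact Or.inr (hinj _ hj _ hi h)
    obtain ⟨f₂, hf₂, hf₂p⟩ : ∃ f ∈ G.filter (fun e => a (k - 1) ∈ e), f ≠ p (k - 2) := by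
      refine Finset.exists_mem_ne ?_ _
      have := hmin (a (k - 1)) (haS _ (by omega))
      unfold hDeg at this
      omega
    rw [Finset.mem_filter] at hf₂
    obtain ⟨y, hy⟩ := hcolour f₂ (hGF _ hf₂.1)
    have hyf : y ∈ f₂ ∧ y ∈ N := Finset.mem_inter.1 (by rw [hy]; simp)
    obtain ⟨hyu, g₂, hg₂, hug₂, hyg₂⟩ := (hmemN y).1 hyf.2
    -- At most three edges at `a 0` are unusable: `p 0` and one for each vertex of `g₂ \ {u}`.
    obtain ⟨f₁, hf₁, hva, hf₁p, hf₁g⟩ : ∃ f ∈ G, a 0 ∈ f ∧ f ≠ p 0 ∧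
        ∀ x ∈ f, x ∈ N → x ∉ g₂ := by
      by_contra! hcon
      have hsub : G.filter (fun e => a 0 ∈ e) ⊆ {p 0} ∪
          (g₂.erase u).biUnion (fun x => G.filter (fun e => a 0 ∈ e ∧ x ∈ e ∧ x ∈ N)) := by
        intro e he
        rw [Finset.mem_filter] at he
        by_cases hep : e = p 0
        · simp [hep]
        · obtain ⟨x, hxe, hxN, hxg⟩ := hcon e he.1 he.2 hep
          refine Finset.mem_union_right _ (Finset.mem_biUnion.2 ⟨x, ?_, ?_⟩)
          · exact Finset.mem_erase.2 ⟨((hmemN x).1 hxN).1, hxg⟩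
          · exact Finset.mem_filter.2 ⟨he.1, he.2, hxe, hxN⟩
      have hone : ∀ x ∈ g₂.erase u,
          (G.filter (fun e => a 0 ∈ e ∧ x ∈ e ∧ x ∈ N)).card ≤ 1 := by
        intro x _
        refine Finset.card_le_one.2 fun e he f hf => ?_
        rw [Finset.mem_filter] at he hf
        refine eq_of_linear hGlin he.1 hf.1 (x := a 0) (y := x) ?_ he.2.1 he.2.2.1 hf.2.1 hf.2.2.1
        intro h
        exact (hSu _ (haS 0 (by omega))).2 (h ▸ he.2.2.2)
      have h1 := Finset.card_le_card hsub
      have h2 := Finset.card_union_le {p 0}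
        ((g₂.erase u).biUnion (fun x => G.filter (fun e => a 0 ∈ e ∧ x ∈ e ∧ x ∈ N)))
      have h3 := Finset.card_biUnion_le_card_mul _ _ 1 hone
      rw [Finset.card_erase_of_mem hug₂, hunif _ hg₂] at h3
      rw [Finset.card_singleton] at h2
      rw [← ha0] at hvdeg
      unfold hDeg at hvdeg
      omega
    obtain ⟨x, hx⟩ := hcolour f₁ (hGF _ hf₁)
    have hxf : x ∈ f₁ ∧ x ∈ N := Finset.mem_inter.1 (by rw [hx]; simp)
    obtain ⟨hxu, g₁, hg₁, hug₁, hxg₁⟩ := (hmemN x).1 hxf.2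
    have hxg₂ := hf₁g x hxf.1 hxf.2
    refine not_free_of_path E k (by omega) u x y f₁ f₂ g₁ g₂ a p hxu.symm hyu.symm ?_
      (fun i hi => (hSu _ (haS i hi)).1) ?_ ?_ hinj
      ⟨hFE _ (hGF _ hf₁), hxf.1, hva⟩ ⟨hFE _ (hGF _ hf₂.1), hf₂.2, hyf.1⟩
      ⟨hg₁, hug₁, hxg₁⟩ ⟨hg₂, hyg₂, hug₂⟩
      (fun i hi => ⟨hFE _ (hGF _ (hp i hi).1), (hp i hi).2⟩)
      (huF _ (hGF _ hf₁)) (huF _ (hGF _ hf₂.1)) (fun i hi => huF _ (hGF _ (hp i hi).1))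
      ?_ ?_ ?_ ?_ ?_ hfree
    · rintro rfl
      exact hxg₂ hyg₂
    · rintro i hi rfl
      exact (hSu _ (haS i hi)).2 hxf.2
    · rintro i hi rfl
      exact (hSu _ (haS i hi)).2 hyf.2
    · rintro rfl
      exact hxg₂ hxg₁
    · rintro rfl
      exact hf₁g y hyf.1 hyf.2 hyg₂
    · rintro i hi rfl
      rcases hpidx i hi 0 (by omega) hva with h | h
      · exact hf₁p (by rw [← h])
      · omega
    · rintro i hi rfl
      rcases hpidx i hi (k - 1) (by omega) hf₂.2 with h | h
      · omega
      · exact hf₂p (by rw [show k - 2 = i by omega])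
    · intro i hi j hj hij
      have h1 := hpidx j hj i (by omega) (hij ▸ (hp i hi).2.1)
      have h2 := hpidx i hi j (by omega) (hij ▸ (hp j hj).2.1)
      omega
  have hcount : eCount E N 1 = F.card := rfl
  have hR : (2 * F.card : ℝ) ≤ (2 * l - 7) * W.card := by
    have : ((2 * F.card : ℕ) : ℝ) ≤ (((2 * l - 7) * W.card : ℕ) : ℝ) := by exact_mod_cast hmain
    rw [Nat.cast_mul, Nat.cast_mul, Nat.cast_sub (by omega)] at this
    push_cast at this
    exact this
  have hWR : (Fintype.card V : ℝ) - 2 * (hDeg E u : ℝ) - 1 = W.card := by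
    rw [← hWcard]
    push_cast
    ring
  rw [hcount, hWR]
  linarith
end

section
/- Let H be a connected linear 3-uniform hypergraph on n vertices with no Berge cycle of length l (l ≥ 5), and let u be any vertex with degree d_u. Then Σ_{v ∈ N_u} d_v ≤ (2l-7)(n-1)/2 + 2(2l-3)·d_u. -/
/-!
Write `S = N_u` and `d = d_u`, so `|S| ≤ 2d`. Counting incidences, `∑ v ∈ S, d_v = ∑ e, |e ∩ S|`:
edges through `u` contribute at most `2d`; the set `F₂` of edges that avoid `u` and meet `S` in at
least two vertices contributes at most `3|F₂|`; the set `F₁` of edges that avoid `u` and meet `S`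
in one vertex contributes `|F₁|`. The theorem follows from
`2|F₂| ≤ (2l-5)|S|` (`two_mul_card_edges_two_le`) and
`2|F₁| ≤ (2l-7)(n-1-|S|)` (`two_mul_card_edges_one_le`).

In both cases choose a pair of vertices in each edge, inside `S` for `F₂` and outside `S ∪ {u}` for
`F₁`. By linearity distinct edges give distinct pairs, so this is a graph, and a path in it is a
Berge path (`exists_pair_graph`). If the bound fails, the average degree exceeds `m = 2l-5`,
respectively `m = 2l-7`, and some induced subgraph has all degrees above `m/2` and one above `m`
(`exists_dense_core`). Colour a neighbour `x` of `u` by the edge joining it to `u`; each colour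
occurs at most twice in `S`.

* For `F₂`, minimum degree `l-2 ≥ 3` gives a path of length `l-2` whose ends have different colours
  (`exists_path_ends_ne`). With `u` it closes to a Berge `C_l`.
* For `F₁`, start a path of length `l-4` at a vertex of degree at least `2l-6`. Extend its end by a
  further edge `f'` of `F₁`, leading to a vertex of `S`. At the start there are at least
  `2l-7 ≥ 3` edges of `F₁` other than the first path edge; by linearity at most two of them lead to
  the colour of `f'`, so some edge leads to another colour. Again `u` closes the Berge `C_l`.
-/

attribute [local instance] Classical.propDecidable

/-! ### Paths in dense graphs -/

open Finset in
/-- A graph with average degree greater than `m` has an induced subgraph `Y` in which every degree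
exceeds `m / 2` and some degree exceeds `m`: take `Y` minimal of average degree greater than `m`. -/
lemma exists_dense_core_s7 {V : Type*} [Fintype V] [DecidableEq V] (G : SimpleGraph V) (X : Finset V)
    (m : ℕ) (h : m * #X < ∑ x ∈ X, #(X.filter (G.Adj x))) :
    ∃ Y : Finset V, (∃ x ∈ Y, m < #(Y.filter (G.Adj x))) ∧
      ∀ x ∈ Y, m < 2 * #(Y.filter (G.Adj x)) := by
  induction X using Finset.strongInduction with
  | H X ih =>
    by_cases hmin : ∃ x ∈ X, m * #(X.erase x) < ∑ z ∈ X.erase x, #((X.erase x).filter (G.Adj z))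
    · obtain ⟨x, hx, hlt⟩ := hmin
      exact ih _ (Finset.erase_ssubset hx) hlt
    · push Not at hmin
      refine ⟨X, ?_, fun x hx => ?_⟩
      · by_contra! hcon
        have := Finset.sum_le_card_nsmul X _ m hcon
        rw [smul_eq_mul, mul_comm] at this
        omega
      · have h1 := hmin x hx
        have hsplit : ∀ z ∈ X.erase x, #(X.filter (G.Adj z)) =
            #((X.erase x).filter (G.Adj z)) + if G.Adj x z then 1 else 0 := by
          intro z hz
          rw [Finset.filter_erase]
          split_ifs with hxz
          · rw [Finset.card_erase_add_one]
            simp [hx, hxz.symm]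
          · rw [Finset.erase_eq_of_notMem, add_zero]
            simp only [Finset.mem_filter, not_and]
            exact fun _ h' => hxz h'.symm
        have hdeg : ∑ z ∈ X.erase x, (if G.Adj x z then 1 else 0) = #(X.filter (G.Adj x)) := by
          rw [← Finset.card_filter, Finset.filter_erase, Finset.erase_eq_of_notMem]
          simp
        rw [← Finset.add_sum_erase X _ hx, Finset.sum_congr rfl hsplit, Finset.sum_add_distrib,
          hdeg, ← Finset.card_erase_add_one hx] at h
        rw [mul_add] at h
        omega

open Finset in
/-- A path of length `k` is encoded by a map `ℕ → V` of which only the values on `0, …, k`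
matter. -/
lemma exists_path_of_le_degree {V : Type*} [Fintype V] [DecidableEq V] (G : SimpleGraph V)
    (Y : Finset V) (k : ℕ) (hdeg : ∀ x ∈ Y, k ≤ #(Y.filter (G.Adj x))) (x₀ : V) (hx₀ : x₀ ∈ Y) :
    ∃ w : ℕ → V, w 0 = x₀ ∧ (∀ i ≤ k, w i ∈ Y) ∧ (∀ i ≤ k, ∀ j ≤ k, w i = w j → i = j) ∧
      ∀ i < k, G.Adj (w i) (w (i + 1)) := by
  suffices H : ∀ n ≤ k, ∃ w : ℕ → V, w 0 = x₀ ∧ (∀ i ≤ n, w i ∈ Y) ∧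
      (∀ i ≤ n, ∀ j ≤ n, w i = w j → i = j) ∧ ∀ i < n, G.Adj (w i) (w (i + 1)) from H k le_rfl
  intro n
  induction n with
  | zero => exact fun _ => ⟨fun _ => x₀, rfl, by simp [hx₀], by simp, by simp⟩
  | succ n ih =>
    intro hn
    obtain ⟨w, h0, hY, hinj, hadj⟩ := ih (by omega)
    -- only `n` of the at least `n + 1` neighbours of the endpoint can precede it on the path
    obtain ⟨y, hy, hyn⟩ : ∃ y ∈ Y.filter (G.Adj (w n)), y ∉ (range n).image w := by
      apply Finset.exists_mem_notMem_of_card_lt_card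
      have := hdeg _ (hY n le_rfl)
      have := Finset.card_image_le (s := range n) (f := w)
      rw [Finset.card_range] at this
      omega
    rw [Finset.mem_filter] at hy
    have hne : ∀ i ≤ n, w i ≠ y := by
      intro i hi h
      rcases hi.lt_or_eq with hi | rfl
      · exact hyn (Finset.mem_image.2 ⟨i, Finset.mem_range.2 hi, h⟩)
      · exact G.ne_of_adj hy.2 h
    have hw : ∀ i ≤ n, Function.update w (n + 1) y i = w i := fun i hi =>
      Function.update_of_ne (by omega) _ _
    have hw' : Function.update w (n + 1) y (n + 1) = y := Function.update_self _ _ _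
    refine ⟨Function.update w (n + 1) y, by rw [hw 0 (by omega), h0], ?_, ?_, ?_⟩
    · intro i hi
      rcases Nat.le_succ_iff.1 hi with hi | rfl
      · rw [hw i hi]; exact hY i hi
      · rw [hw']; exact hy.1
    · intro i hi j hj hij
      rcases Nat.le_succ_iff.1 hi with hi | rfl <;> rcases Nat.le_succ_iff.1 hj with hj | rfl
      · rw [hw i hi, hw j hj] at hij; exact hinj i hi j hj hij
      · rw [hw i hi, hw'] at hij; exact absurd hij (hne i hi)
      · rw [hw j hj, hw'] at hij; exact absurd hij.symm (hne j hj)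
      · rfl
    · intro i hi
      rcases Nat.lt_succ_iff_lt_or_eq.1 hi with hi | rfl
      · rw [hw i hi.le, hw (i + 1) hi]; exact hadj i hi
      · rw [hw i le_rfl, hw']; exact hy.2

open Finset in
/-- Minimum degree `k` gives a path of length `k`; when no three vertices share a colour, its ends
can be given different colours. If every extension of a path `w 0, …, w (k - 1)` ends in the colour
of `w 0`, then its last vertex is adjacent to `w 0` and to some `y` of that colour off the path, and
`w (k - 2), …, w 0, w (k - 1), y` works. -/
lemma exists_path_ends_ne {V α : Type*} [Fintype V] [DecidableEq V] (G : SimpleGraph V)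
    (Y : Finset V) (k : ℕ) (hk : 3 ≤ k) (hdeg : ∀ x ∈ Y, k ≤ #(Y.filter (G.Adj x)))
    (hY : Y.Nonempty) (c : V → α)
    (hc : ∀ x ∈ Y, ∀ y ∈ Y, ∀ z ∈ Y, c x = c y → c x = c z → x = y ∨ x = z ∨ y = z) :
    ∃ w : ℕ → V, (∀ i ≤ k, w i ∈ Y) ∧ (∀ i ≤ k, ∀ j ≤ k, w i = w j → i = j) ∧
      (∀ i < k, G.Adj (w i) (w (i + 1))) ∧ c (w 0) ≠ c (w k) := by
  obtain ⟨x₀, hx₀⟩ := hY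
  obtain ⟨k, rfl⟩ : ∃ r, k = r + 2 := ⟨k - 2, by omega⟩
  obtain ⟨w, -, hwY, hinj, hadj⟩ := exists_path_of_le_degree G Y (k + 1)
    (fun x hx => le_trans (by omega) (hdeg x hx)) x₀ hx₀
  -- extending a path on `k + 2` vertices by one further vertex `y`
  have key : ∀ p : ℕ → V, (∀ i ≤ k + 1, p i ∈ Y) → (∀ i ≤ k + 1, ∀ j ≤ k + 1, p i = p j → i = j) →
      (∀ i < k + 1, G.Adj (p i) (p (i + 1))) → ∀ y ∈ Y, G.Adj (p (k + 1)) y →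
      (∀ i ≤ k + 1, p i ≠ y) → c (p 0) ≠ c y →
      ∃ w : ℕ → V, (∀ i ≤ k + 2, w i ∈ Y) ∧ (∀ i ≤ k + 2, ∀ j ≤ k + 2, w i = w j → i = j) ∧
      (∀ i < k + 2, G.Adj (w i) (w (i + 1))) ∧ c (w 0) ≠ c (w (k + 2)) := by
    intro p hpY hpinj hpadj y hyY hy hne hcy
    refine ⟨fun i => if i ≤ k + 1 then p i else y, ?_, ?_, ?_, by simpa using hcy⟩
    · intro i hi
      dsimp only
      split_ifs with h
      · exact hpY i h
      · exact hyY
    · intro i hi j hj hij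
      dsimp only at hij
      split_ifs at hij with h h' h'
      · exact hpinj i h j h' hij
      · exact absurd hij (hne i h)
      · exact absurd hij.symm (hne j h')
      · omega
    · intro i hi
      dsimp only
      rw [if_pos (by omega : i ≤ k + 1)]
      split_ifs with h
      · exact hpadj i (by omega)
      · rw [show i = k + 1 by omega]; exact hy
  by_cases hgood : ∃ y ∈ Y, G.Adj (w (k + 1)) y ∧ (∀ i ≤ k + 1, w i ≠ y) ∧ c (w 0) ≠ c y
  · obtain ⟨y, hyY, hy, hne, hcy⟩ := hgood
    exact key w hwY hinj hadj y hyY hy hne hcy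
  · push Not at hgood
    have hpath : #((range (k + 1)).image w) ≤ k + 1 :=
      Finset.card_image_le.trans (Finset.card_range _).le
    have hd := hdeg _ (hwY (k + 1) le_rfl)
    have hoff : ∀ y ∈ Y.filter (G.Adj (w (k + 1))), y ∉ (range (k + 1)).image w →
        (∀ i ≤ k + 1, w i ≠ y) := by
      intro y hy hyn i hi h
      rcases hi.lt_or_eq with hi | rfl
      · exact hyn (Finset.mem_image.2 ⟨i, Finset.mem_range.2 hi, h⟩)
      · exact G.ne_of_adj (Finset.mem_filter.1 hy).2 h
    obtain ⟨y, hy, hyn⟩ : ∃ y ∈ Y.filter (G.Adj (w (k + 1))), y ∉ (range (k + 1)).image w :=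
      Finset.exists_mem_notMem_of_card_lt_card (by omega)
    have hne := hoff y hy hyn
    rw [Finset.mem_filter] at hy
    have hcy := hgood y hy.1 hy.2 hne
    have h0adj : G.Adj (w (k + 1)) (w 0) := by
      by_contra hn
      -- otherwise the neighbours of `w (k + 1)` lie in the too small set `y, w 1, …, w k`
      have hsub : Y.filter (G.Adj (w (k + 1))) ⊆
          insert y (((range (k + 1)).image w).erase (w 0)) := by
        intro z hz
        by_cases hzn : z ∈ (range (k + 1)).image w
        · refine Finset.mem_insert_of_mem (Finset.mem_erase.2 ⟨?_, hzn⟩)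
          rintro rfl
          exact hn (Finset.mem_filter.1 hz).2
        · have hzne := hoff z hz hzn
          rw [Finset.mem_filter] at hz
          have hcz := hgood z hz.1 hz.2 hzne
          rcases hc _ (hwY 0 (by omega)) y hy.1 z hz.1 hcy hcz with h | h | h
          · exact absurd h (hne 0 (by omega))
          · exact absurd h (hzne 0 (by omega))
          · exact Finset.mem_insert.2 (Or.inl h.symm)
      have h1 := Finset.card_le_card hsub
      have h2 := Finset.card_insert_le y (((range (k + 1)).image w).erase (w 0))
      have h3 : #(((range (k + 1)).image w).erase (w 0)) + 1 = #((range (k + 1)).image w) :=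
        Finset.card_erase_add_one (Finset.mem_image.2 ⟨0, by simp, rfl⟩)
      omega
    -- reverse the initial segment `w 0, …, w k` of the cycle
    refine key (fun i => if i ≤ k then w (k - i) else w (k + 1)) ?_ ?_ ?_ y hy.1 ?_ ?_ ?_
    · intro i hi
      split_ifs
      · exact hwY _ (by omega)
      · exact hwY _ le_rfl
    · intro i hi j hj hij
      split_ifs at hij with h h' h'
      · have := hinj _ (by omega) _ (by omega) hij; omega
      · have := hinj _ (by omega) _ (by omega) hij; omega
      · have := hinj _ (by omega) _ (by omega) hij; omega
      · omega
    · intro i hi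
      rw [if_pos (by omega : i ≤ k)]
      split_ifs with h
      · have := hadj (k - (i + 1)) (by omega)
        rw [show k - (i + 1) + 1 = k - i by omega] at this
        exact this.symm
      · rw [show k - i = 0 by omega]; exact h0adj.symm
    · simpa using hy.2
    · intro i hi
      split_ifs
      · exact hne _ (by omega)
      · exact hne _ le_rfl
    · simp only [Nat.zero_le, if_true, Nat.sub_zero]
      intro hck
      rcases hc _ (hwY 0 (by omega)) y hy.1 _ (hwY k (by omega)) hcy (hcy.trans hck.symm)
        with h | h | h
      · exact hne 0 (by omega) h
      · have := hinj _ (by omega) _ (by omega) h; omega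
      · exact hne k (by omega) h.symm

/-! ### From graph paths to Berge cycles -/

open Finset in
/-- In a linear hypergraph, choosing a pair of vertices of `X` inside each edge of `F` produces a
graph on `X` whose edges correspond bijectively, via `φ`, to the members of `F`. -/
lemma exists_pair_graph {V : Type*} [Fintype V] [DecidableEq V] [Nonempty V] (F : Finset (Finset V))
    (hlin : ∀ e ∈ F, ∀ f ∈ F, e ≠ f → (e ∩ f).card ≤ 1) (X : Finset V)
    (hF : ∀ e ∈ F, 2 ≤ #(e ∩ X)) :
    ∃ (G : SimpleGraph V) (φ : Sym2 V → Finset V),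
      (∀ x y, G.Adj x y → x ∈ X ∧ φ s(x, y) ∈ F ∧ x ∈ φ s(x, y)) ∧
      (∀ x y x' y', G.Adj x y → G.Adj x' y' → φ s(x, y) = φ s(x', y') → s(x, y) = s(x', y')) ∧
      2 * #F ≤ ∑ x ∈ X, #(X.filter (G.Adj x)) := by
  have hpair : ∀ e : Finset V, ∃ p : V × V, e ∈ F →
      p.1 ∈ e ∩ X ∧ p.2 ∈ e ∩ X ∧ p.1 ≠ p.2 := by
    intro e
    by_cases he : e ∈ F
    · obtain ⟨a, ha, b, hb, hab⟩ := Finset.one_lt_card.1 (hF e he)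
      exact ⟨(a, b), fun _ => ⟨ha, hb, hab⟩⟩
    · exact ⟨Classical.arbitrary _, fun h => absurd h he⟩
  choose p hp using hpair
  let t : Finset V → Sym2 V := fun e => s((p e).1, (p e).2)
  have htmem : ∀ e ∈ F, ∀ x ∈ t e, x ∈ e ∧ x ∈ X := by
    intro e he x hx
    obtain ⟨h1, h2, -⟩ := hp e he
    rcases Sym2.mem_iff.1 hx with rfl | rfl
    · exact Finset.mem_inter.1 h1
    · exact Finset.mem_inter.1 h2
  have htinj : Set.InjOn t (F : Set (Finset V)) := by
    intro e he f hf hef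
    by_contra hne
    obtain ⟨h1, h2, h3⟩ := hp e he
    have : 1 < #(e ∩ f) := Finset.one_lt_card.2
      ⟨(p e).1, Finset.mem_inter.2 ⟨(htmem e he _ (Sym2.mem_mk_left _ _)).1,
        (htmem f hf _ (hef ▸ Sym2.mem_mk_left _ _)).1⟩,
       (p e).2, Finset.mem_inter.2 ⟨(htmem e he _ (Sym2.mem_mk_right _ _)).1,
        (htmem f hf _ (hef ▸ Sym2.mem_mk_right _ _)).1⟩, h3⟩
    have := hlin e he f hf hne
    omega
  obtain ⟨G, hGdef⟩ : ∃ G : SimpleGraph V, G = SimpleGraph.fromEdgeSet (t '' (F : Set (Finset V))) :=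
    ⟨_, rfl⟩
  have hG : ∀ x y, G.Adj x y → ∃ e ∈ F, t e = s(x, y) := by
    intro x y h
    rw [hGdef] at h
    obtain ⟨⟨e, he, h⟩, -⟩ := (SimpleGraph.fromEdgeSet_adj _).1 h
    exact ⟨e, he, h⟩
  have hφ : ∀ x y, G.Adj x y → Function.invFunOn t (F : Set (Finset V)) s(x, y) ∈ F ∧
      t (Function.invFunOn t (F : Set (Finset V)) s(x, y)) = s(x, y) := by
    intro x y h
    exact ⟨Function.invFunOn_mem (hG x y h), Function.invFunOn_eq (hG x y h)⟩
  refine ⟨G, Function.invFunOn t (F : Set (Finset V)), ?_, ?_, ?_⟩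
  · intro x y h
    obtain ⟨h1, h2⟩ := hφ x y h
    have := htmem _ h1 x (by rw [h2]; exact Sym2.mem_mk_left _ _)
    exact ⟨this.2, h1, this.1⟩
  · intro x y x' y' h h' heq
    rw [← (hφ x y h).2, ← (hφ x' y' h').2, heq]
  · have hsum : ∑ x ∈ X, #(X.filter (G.Adj x)) = ∑ x, G.degree x := by
      have hX : ∀ x y, G.Adj x y → x ∈ X := by
        intro x y h
        obtain ⟨e, he, h⟩ := hG x y h
        exact (htmem e he x (h ▸ Sym2.mem_mk_left _ _)).2
      rw [← Finset.sum_subset (Finset.subset_univ X)]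
      · refine Finset.sum_congr rfl fun x _ => ?_
        rw [← SimpleGraph.card_neighborFinset_eq_degree]
        congr 1
        ext y
        simp only [Finset.mem_filter, SimpleGraph.mem_neighborFinset, and_iff_right_iff_imp]
        exact fun h => hX y x h.symm
      · intro x _ hx
        rw [SimpleGraph.degree_eq_zero_iff_notMem_support]
        rintro ⟨y, hy⟩
        exact hx (hX x y hy)
    rw [hsum, SimpleGraph.sum_degrees_eq_twice_card_edges]
    refine Nat.mul_le_mul_left 2 (Finset.card_le_card_of_injOn t ?_ htinj)
    intro e he
    simp only [Finset.mem_coe, SimpleGraph.mem_edgeFinset, hGdef]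
    refine (SimpleGraph.fromEdgeSet_adj _).2 ⟨⟨e, he, rfl⟩, (hp e he).2.2⟩

/-- A Berge path `x 0, …, x k` avoiding `u`, whose ends lie in two different edges through `u`,
closes up to a Berge cycle of length `k + 2`. -/
lemma not_bergeCycleFree_of_path {V : Type*} (E : Finset (Finset V)) (u : V) (k : ℕ)
    (x : ℕ → V) (g : ℕ → Finset V) (a b : Finset V)
    (hxu : ∀ i ≤ k, x i ≠ u) (hx : ∀ i ≤ k, ∀ j ≤ k, x i = x j → i = j)
    (hgE : ∀ i < k, g i ∈ E ∧ u ∉ g i) (hg : ∀ i < k, ∀ j < k, g i = g j → i = j)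
    (hmem : ∀ i < k, x i ∈ g i ∧ x (i + 1) ∈ g i)
    (ha : a ∈ E ∧ u ∈ a ∧ x 0 ∈ a) (hb : b ∈ E ∧ u ∈ b ∧ x k ∈ b) (hab : a ≠ b) :
    ¬ BergeCycleFree E (k + 2) := by
  refine not_not.2 ⟨fun i => if i.val = 0 then u else x (i.val - 1),
    fun i => if i.val = 0 then a else if i.val ≤ k then g (i.val - 1) else b, ?_, ?_, ?_⟩
  · rintro ⟨i, hi⟩ ⟨j, hj⟩ hij
    dsimp only at hij
    rw [Fin.mk.injEq]
    split_ifs at hij with h h' h'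
    · omega
    · exact absurd hij.symm (hxu _ (by omega))
    · exact absurd hij (hxu _ (by omega))
    · have := hx _ (by omega) _ (by omega) hij; omega
  · rintro ⟨i, hi⟩ ⟨j, hj⟩ hij
    dsimp only at hij
    rw [Fin.mk.injEq]
    have hga : ∀ i < k, g i ≠ a := fun i hi h => (hgE i hi).2 (h ▸ ha.2.1)
    have hgb : ∀ i < k, g i ≠ b := fun i hi h => (hgE i hi).2 (h ▸ hb.2.1)
    split_ifs at hij
    · omega
    · exact absurd hij.symm (hga _ (by omega))
    · exact absurd hij hab
    · exact absurd hij (hga _ (by omega))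
    · have := hg _ (by omega) _ (by omega) hij; omega
    · exact absurd hij (hgb _ (by omega))
    · exact absurd hij.symm hab
    · exact absurd hij.symm (hgb _ (by omega))
    · omega
  · rintro ⟨i, hi⟩
    dsimp only
    rcases Nat.lt_or_ge i (k + 1) with h | h
    · simp only [Nat.mod_eq_of_lt (by omega : i + 1 < k + 2), if_neg (by omega : ¬ i + 1 = 0),
        Nat.add_sub_cancel]
      split_ifs with h0 h1
      · subst h0; exact ha
      · have h2 := hmem (i - 1) (by omega)
        rw [Nat.sub_add_cancel (by omega)] at h2
        exact ⟨(hgE _ (by omega)).1, h2⟩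
      · omega
    · obtain rfl : i = k + 1 := by omega
      simp only [show k + 1 + 1 = k + 2 from rfl, Nat.mod_self, if_true, Nat.add_eq_zero_iff,
        one_ne_zero, and_false, if_false, Nat.add_sub_cancel, if_neg (by omega : ¬ k + 1 ≤ k)]
      exact ⟨hb.1, hb.2.2, hb.2.1⟩

/-! ### Counting the edges that meet the neighbourhood -/

open Finset in
/-- The neighbours of `u` are coloured by the edge `c x` joining `x` to `u`; each colour is used at
most twice. -/
lemma exists_nbhd_colouring {V : Type*} [Fintype V] [DecidableEq V] (E : Finset (Finset V))
    (hunif : ∀ e ∈ E, e.card = 3) (u : V) :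
    ∃ c : V → Finset V, (∀ x ∈ hNbhd E u, c x ∈ E ∧ u ∈ c x ∧ x ∈ c x) ∧
      ∀ x ∈ hNbhd E u, ∀ y ∈ hNbhd E u, ∀ z ∈ hNbhd E u, c x = c y → c x = c z →
        x = y ∨ x = z ∨ y = z := by
  have h : ∀ x, ∃ e : Finset V, x ∈ hNbhd E u → e ∈ E ∧ u ∈ e ∧ x ∈ e := by
    intro x
    by_cases hx : x ∈ hNbhd E u
    · obtain ⟨-, e, he⟩ := (Finset.mem_filter.1 hx).2
      exact ⟨e, fun _ => he⟩
    · exact ⟨∅, fun h => absurd h hx⟩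
  choose c hc using h
  refine ⟨c, hc, ?_⟩
  intro x hx y hy z hz hxy hxz
  by_contra! hne
  have hsub : ({u, x, y, z} : Finset V) ⊆ c x := by
    intro v hv
    simp only [Finset.mem_insert, Finset.mem_singleton] at hv
    rcases hv with rfl | rfl | rfl | rfl
    · exact (hc x hx).2.1
    · exact (hc _ hx).2.2
    · exact hxy ▸ (hc _ hy).2.2
    · exact hxz ▸ (hc _ hz).2.2
  have hu : ∀ v ∈ hNbhd E u, u ≠ v := fun v hv h => (Finset.mem_filter.1 hv).2.1 h.symm
  have h4 : #({u, x, y, z} : Finset V) = 4 := by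
    rw [Finset.card_insert_of_notMem, Finset.card_insert_of_notMem, Finset.card_pair hne.2.2]
    · simp [hne.1, hne.2.1]
    · simp [hu x hx, hu y hy, hu z hz]
  have := Finset.card_le_card hsub
  rw [hunif _ (hc x hx).1] at this
  omega

/-- Consecutive pairs of an injective sequence are pairwise different. -/
lemma eq_of_consecutive_pairs_eq {V : Type*} (w : ℕ → V) (k : ℕ)
    (hinj : ∀ i ≤ k, ∀ j ≤ k, w i = w j → i = j) (i j : ℕ) (hi : i < k) (hj : j < k)
    (h : s(w i, w (i + 1)) = s(w j, w (j + 1))) : i = j := by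
  rcases Sym2.eq_iff.1 h with ⟨h1, -⟩ | ⟨h1, h2⟩
  · exact hinj _ hi.le _ hj.le h1
  · have := hinj _ hi.le _ hj h1
    have := hinj _ hi _ hj.le h2
    omega

open Finset in
/-- Otherwise the pairs inside `N_u` carry a Berge path of length `l - 2` between neighbours of `u`
lying in different edges through `u`, which closes up through `u`. -/
lemma two_mul_card_edges_two_le {V : Type*} [Fintype V] [DecidableEq V]
    (E : Finset (Finset V)) (l : ℕ) (hl : 5 ≤ l)
    (hunif : ∀ e ∈ E, e.card = 3)
    (hlin : ∀ e ∈ E, ∀ f ∈ E, e ≠ f → (e ∩ f).card ≤ 1)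
    (hfree : BergeCycleFree E l) (u : V) :
    2 * #(E.filter fun e => u ∉ e ∧ 2 ≤ #(e ∩ hNbhd E u)) ≤ (2 * l - 5) * #(hNbhd E u) := by
  by_contra! hcon
  have : Nonempty V := ⟨u⟩
  obtain ⟨k, rfl⟩ : ∃ k, l = k + 2 := ⟨l - 2, by omega⟩
  set F := E.filter fun e => u ∉ e ∧ 2 ≤ #(e ∩ hNbhd E u) with hFdef
  have hFE : ∀ e ∈ F, e ∈ E ∧ u ∉ e := fun e he =>
    ⟨(Finset.mem_filter.1 he).1, (Finset.mem_filter.1 he).2.1⟩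
  obtain ⟨G, φ, hG, hφ, hsum⟩ := exists_pair_graph F
    (fun e he f hf => hlin e (hFE e he).1 f (hFE f hf).1) (hNbhd E u)
    (fun e he => (Finset.mem_filter.1 he).2.2)
  obtain ⟨Y, ⟨x₀, hx₀, -⟩, hY⟩ := exists_dense_core_s7 G (hNbhd E u) _ (hcon.trans_le hsum)
  have hYS : ∀ x ∈ Y, x ∈ hNbhd E u := by
    intro x hx
    have := hY x hx
    obtain ⟨y, hy⟩ := Finset.card_pos.1 (by omega : 0 < #(Y.filter (G.Adj x)))
    exact (hG x y (Finset.mem_filter.1 hy).2).1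
  obtain ⟨c, hc, hc2⟩ := exists_nbhd_colouring E hunif u
  obtain ⟨w, hwY, hinj, hadj, hends⟩ := exists_path_ends_ne G Y k (by omega)
    (fun x hx => by have := hY x hx; omega) ⟨x₀, hx₀⟩ c
    (fun x hx y hy z hz => hc2 x (hYS x hx) y (hYS y hy) z (hYS z hz))
  refine not_bergeCycleFree_of_path E u k w (fun i => φ s(w i, w (i + 1))) (c (w 0)) (c (w k))
    ?_ hinj ?_ ?_ ?_ ?_ ?_ hends hfree
  · exact fun i hi => (Finset.mem_filter.1 (hYS _ (hwY i hi))).2.1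
  · exact fun i hi => hFE _ (hG _ _ (hadj i hi)).2.1
  · intro i hi j hj hij
    exact eq_of_consecutive_pairs_eq w k hinj i j hi hj (hφ _ _ _ _ (hadj i hi) (hadj j hj) hij)
  · intro i hi
    refine ⟨(hG _ _ (hadj i hi)).2.2, ?_⟩
    have := (hG _ _ (hadj i hi).symm).2.2
    rwa [Sym2.eq_swap] at this
  · exact hc _ (hYS _ (hwY 0 (by omega)))
  · exact hc _ (hYS _ (hwY k le_rfl))

open Finset in
/-- Otherwise the pairs outside `N_u ∪ {u}` carry a Berge path of length `l - 4` which extends at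
both ends, by edges meeting `N_u` in neighbours of `u` lying in different edges through `u`. It
starts at a vertex of degree at least `2 * l - 6`, which leaves enough freedom to choose its first
extending edge after the last one. -/
lemma two_mul_card_edges_one_le {V : Type*} [Fintype V] [DecidableEq V]
    (E : Finset (Finset V)) (l : ℕ) (hl : 5 ≤ l)
    (hunif : ∀ e ∈ E, e.card = 3)
    (hlin : ∀ e ∈ E, ∀ f ∈ E, e ≠ f → (e ∩ f).card ≤ 1)
    (hfree : BergeCycleFree E l) (u : V) :
    2 * #(E.filter fun e => u ∉ e ∧ #(e ∩ hNbhd E u) = 1) ≤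
      (2 * l - 7) * #((univ \ hNbhd E u).erase u) := by
  by_contra! hcon
  have : Nonempty V := ⟨u⟩
  obtain ⟨q, rfl⟩ : ∃ q, l = q + 4 := ⟨l - 4, by omega⟩
  set S := hNbhd E u with hS
  set X := (univ \ S).erase u with hX
  set F := E.filter fun e => u ∉ e ∧ #(e ∩ S) = 1 with hFdef
  have hFE : ∀ e ∈ F, e ∈ E ∧ u ∉ e := fun e he =>
    ⟨(Finset.mem_filter.1 he).1, (Finset.mem_filter.1 he).2.1⟩
  have hF2 : ∀ e ∈ F, 2 ≤ #(e ∩ X) := by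
    intro e he
    obtain ⟨heE, hue, h1⟩ := Finset.mem_filter.1 he
    have hsub : e \ S ⊆ e ∩ X := by
      intro x hx
      rw [Finset.mem_sdiff] at hx
      refine Finset.mem_inter.2 ⟨hx.1, Finset.mem_erase.2 ⟨?_, by simp [hx.2]⟩⟩
      rintro rfl
      exact hue hx.1
    have := Finset.card_le_card hsub
    have := Finset.card_sdiff_add_card_inter e S
    have := hunif e heE
    omega
  obtain ⟨G, φ, hG, hφ, hsum⟩ := exists_pair_graph F
    (fun e he f hf => hlin e (hFE e he).1 f (hFE f hf).1) X hF2
  have hG' : ∀ x y, G.Adj x y → y ∈ φ s(x, y) := by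
    intro x y h
    have := (hG y x h.symm).2.2
    rwa [Sym2.eq_swap] at this
  obtain ⟨Y, ⟨x₀, hx₀, hbig⟩, hY⟩ := exists_dense_core_s7 G X _ (hcon.trans_le hsum)
  have hYX : ∀ x ∈ Y, x ∉ S ∧ x ≠ u := by
    intro x hx
    have := hY x hx
    obtain ⟨y, hy⟩ := Finset.card_pos.1 (by omega : 0 < #(Y.filter (G.Adj x)))
    have := (hG x y (Finset.mem_filter.1 hy).2).1
    simpa [hX, and_comm] using this
  obtain ⟨c, hc, hc2⟩ := exists_nbhd_colouring E hunif u
  -- `σ e` is the vertex of `e` in `N_u`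
  have hσ : ∀ e : Finset V, ∃ x, e ∈ F → x ∈ e ∧ x ∈ S := by
    intro e
    by_cases he : e ∈ F
    · obtain ⟨x, hx⟩ := Finset.card_eq_one.1 (Finset.mem_filter.1 he).2.2
      have : x ∈ e ∩ S := hx ▸ Finset.mem_singleton_self x
      exact ⟨x, fun _ => Finset.mem_inter.1 this⟩
    · exact ⟨u, fun h => absurd h he⟩
  choose σ hσ using hσ
  obtain ⟨w, rfl, hwY, hinj, hadj⟩ := exists_path_of_le_degree G Y q
    (fun x hx => by have := hY x hx; omega) x₀ hx₀
  obtain ⟨b, hb, hbne⟩ : ∃ b ∈ Y.filter (G.Adj (w q)), b ≠ w (q - 1) := by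
    apply Finset.exists_mem_ne
    have := hY _ (hwY q le_rfl)
    omega
  rw [Finset.mem_filter] at hb
  -- linearity: the edges at a vertex meet `N_u` in different vertices
  have hσinj : ∀ x y z, G.Adj x y → G.Adj x z → σ (φ s(x, y)) = σ (φ s(x, z)) → y = z := by
    intro x y z hy hz h
    have hyF := (hG x y hy).2
    have hzF := (hG x z hz).2
    by_contra hne
    have hφne : φ s(x, y) ≠ φ s(x, z) := by
      intro h
      exact hne (Sym2.congr_right.1 (hφ _ _ _ _ hy hz h))
    have hle := hlin _ (hFE _ hyF.1).1 _ (hFE _ hzF.1).1 hφne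
    have hxS : x ∉ S := by
      have := (hG x y hy).1
      simp only [hX, Finset.mem_erase, Finset.mem_sdiff] at this
      exact this.2.2
    have hlt : 1 < #(φ s(x, y) ∩ φ s(x, z)) := Finset.one_lt_card.2
      ⟨x, Finset.mem_inter.2 ⟨hyF.2, hzF.2⟩, σ (φ s(x, y)),
        Finset.mem_inter.2 ⟨(hσ _ hyF.1).1, h ▸ (hσ _ hzF.1).1⟩,
        fun h' => hxS (h' ▸ (hσ _ hyF.1).2)⟩
    omega
  obtain ⟨a, ha, hane, hac⟩ : ∃ a, G.Adj (w 0) a ∧ a ≠ w 1 ∧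
      c (σ (φ s(w 0, a))) ≠ c (σ (φ s(w q, b))) := by
    by_contra! hall
    have hcard : 2 < #((Y.filter (G.Adj (w 0))).erase (w 1)) := by
      have := Finset.pred_card_le_card_erase (s := Y.filter (G.Adj (w 0))) (a := w 1)
      omega
    obtain ⟨a₁, h₁, a₂, h₂, a₃, h₃, h12, h13, h23⟩ := Finset.two_lt_card.1 hcard
    simp only [Finset.mem_erase, Finset.mem_filter] at h₁ h₂ h₃
    have hS' : ∀ a, G.Adj (w 0) a → σ (φ s(w 0, a)) ∈ S := fun a ha => (hσ _ (hG _ _ ha).2.1).2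
    have e₁ := hall a₁ h₁.2.2 h₁.1
    have e₂ := hall a₂ h₂.2.2 h₂.1
    have e₃ := hall a₃ h₃.2.2 h₃.1
    rcases hc2 _ (hS' a₁ h₁.2.2) _ (hS' a₂ h₂.2.2) _ (hS' a₃ h₃.2.2) (e₁.trans e₂.symm)
      (e₁.trans e₃.symm) with h | h | h
    · exact h12 (hσinj _ _ _ h₁.2.2 h₂.2.2 h)
    · exact h13 (hσinj _ _ _ h₁.2.2 h₃.2.2 h)
    · exact h23 (hσinj _ _ _ h₂.2.2 h₃.2.2 h)
  have hf := (hG _ _ ha).2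
  have hf' := (hG _ _ hb.2).2
  have hfσ := hσ _ hf.1
  have hfσ' := hσ _ hf'.1
  have hff' : φ s(w 0, a) ≠ φ s(w q, b) := fun h => hac (by rw [h])
  have hfp : ∀ i < q, φ s(w i, w (i + 1)) ≠ φ s(w 0, a) := by
    intro i hi h
    rcases Sym2.eq_iff.1 (hφ _ _ _ _ (hadj i hi) ha h) with ⟨h1, h2⟩ | ⟨h1, h2⟩
    · obtain rfl := hinj i hi.le 0 (by omega) h1
      exact hane h2.symm
    · have := hinj _ hi 0 (by omega) h2; omega
  have hfp' : ∀ i < q, φ s(w i, w (i + 1)) ≠ φ s(w q, b) := by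
    intro i hi h
    rcases Sym2.eq_iff.1 (hφ _ _ _ _ (hadj i hi) hb.2 h) with ⟨h1, h2⟩ | ⟨h1, h2⟩
    · have := hinj i hi.le q le_rfl h1; omega
    · have := hinj _ hi q le_rfl h2
      obtain rfl : i = q - 1 := by omega
      exact hbne h1.symm
  have hSw : ∀ v ∈ S, ∀ i ≤ q, w i ≠ v := fun v hv i hi h => (hYX _ (hwY i hi)).1 (h ▸ hv)
  have hSu : ∀ v ∈ S, v ≠ u := fun v hv => (Finset.mem_filter.1 hv).2.1
  refine not_bergeCycleFree_of_path E u (q + 2)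
    (fun i => if i = 0 then σ (φ s(w 0, a)) else if i ≤ q + 1 then w (i - 1) else
      σ (φ s(w q, b)))
    (fun i => if i = 0 then φ s(w 0, a) else if i ≤ q then φ s(w (i - 1), w (i - 1 + 1)) else
      φ s(w q, b))
    (c (σ (φ s(w 0, a)))) (c (σ (φ s(w q, b)))) ?_ ?_ ?_ ?_ ?_ ?_ ?_ hac hfree
  · intro i hi
    split_ifs
    · exact hSu _ hfσ.2
    · exact (hYX _ (hwY _ (by omega))).2
    · exact hSu _ hfσ'.2
  · intro i hi j hj hij
    split_ifs at hij
    · omega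
    · exact absurd hij.symm (hSw _ hfσ.2 _ (by omega))
    · exact absurd (congrArg c hij) hac
    · exact absurd hij (hSw _ hfσ.2 _ (by omega))
    · have := hinj _ (by omega) _ (by omega) hij; omega
    · exact absurd hij (hSw _ hfσ'.2 _ (by omega))
    · exact absurd (congrArg c hij.symm) hac
    · exact absurd hij.symm (hSw _ hfσ'.2 _ (by omega))
    · omega
  · intro i hi
    split_ifs
    · exact hFE _ hf.1
    · exact hFE _ (hG _ _ (hadj (i - 1) (by omega))).2.1
    · exact hFE _ hf'.1
  · intro i hi j hj hij
    split_ifs at hij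
    · omega
    · exact absurd hij.symm (hfp _ (by omega))
    · exact absurd hij hff'
    · exact absurd hij (hfp _ (by omega))
    · have := eq_of_consecutive_pairs_eq w q hinj (i - 1) (j - 1) (by omega) (by omega)
        (hφ _ _ _ _ (hadj _ (by omega)) (hadj _ (by omega)) hij)
      omega
    · exact absurd hij (hfp' _ (by omega))
    · exact absurd hij.symm hff'
    · exact absurd hij.symm (hfp' _ (by omega))
    · omega
  · intro i hi
    rcases Nat.eq_zero_or_pos i with rfl | hi0
    · simpa using ⟨hfσ.1, hf.2⟩
    · obtain ⟨i, rfl⟩ : ∃ j, i = j + 1 := ⟨i - 1, by omega⟩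
      simp only [Nat.add_eq_zero_iff, one_ne_zero, and_false, if_false, Nat.add_sub_cancel]
      rw [if_pos (by omega : i + 1 ≤ q + 1)]
      rcases Nat.lt_or_ge i q with h | h
      · rw [if_pos (by omega), if_pos (by omega)]
        exact ⟨(hG _ _ (hadj i h)).2.2, hG' _ _ (hadj i h)⟩
      · rw [if_neg (by omega), if_neg (by omega), show i = q by omega]
        exact ⟨hf'.2, hfσ'.1⟩
  · simpa using hc _ hfσ.2
  · simpa using hc _ hfσ'.2

open Finset in
lemma card_nbhd_le {V : Type*} [Fintype V] [DecidableEq V] (E : Finset (Finset V))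
    (hunif : ∀ e ∈ E, e.card = 3) (u : V) : #(hNbhd E u) ≤ 2 * hDeg E u := by
  have hsub : hNbhd E u ⊆ (E.filter (fun e => u ∈ e)).biUnion (fun e => e.erase u) := by
    intro x hx
    obtain ⟨hxu, e, he, hue, hxe⟩ := (Finset.mem_filter.1 hx).2
    exact Finset.mem_biUnion.2 ⟨e, Finset.mem_filter.2 ⟨he, hue⟩, Finset.mem_erase.2 ⟨hxu, hxe⟩⟩
  have h := (Finset.card_le_card hsub).trans
    (Finset.card_biUnion_le_card_mul _ _ 2 fun e he => ?_)
  · rw [mul_comm]; exact h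
  · rw [Finset.mem_filter] at he
    rw [Finset.card_erase_of_mem he.2, hunif e he.1]

open Finset in
/-- Double counting of the incidences `v ∈ e` with `v ∈ N_u`: edges through `u` contribute at most
two each, and the other edges at most `1` or `3`. -/
lemma sum_hDeg_nbhd_le {V : Type*} [Fintype V] [DecidableEq V] (E : Finset (Finset V))
    (hunif : ∀ e ∈ E, e.card = 3) (u : V) :
    ∑ v ∈ hNbhd E u, hDeg E v ≤ 2 * hDeg E u
      + 3 * #(E.filter fun e => u ∉ e ∧ 2 ≤ #(e ∩ hNbhd E u))
      + #(E.filter fun e => u ∉ e ∧ #(e ∩ hNbhd E u) = 1) := by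
  have h1 : ∑ v ∈ hNbhd E u, hDeg E v = ∑ e ∈ E, #(e ∩ hNbhd E u) := by
    simp only [hDeg, Finset.card_filter]
    rw [Finset.sum_comm]
    refine Finset.sum_congr rfl fun e _ => ?_
    rw [← Finset.card_filter, Finset.inter_comm, Finset.filter_mem_eq_inter]
  rw [h1]
  simp only [hDeg, Finset.card_filter, Finset.mul_sum]
  rw [← Finset.sum_add_distrib, ← Finset.sum_add_distrib]
  refine Finset.sum_le_sum fun e he => ?_
  have h3 := hunif e he
  by_cases hu : u ∈ e
  · have hsub : e ∩ hNbhd E u ⊆ e.erase u := by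
      intro x hx
      rw [Finset.mem_inter] at hx
      exact Finset.mem_erase.2 ⟨(Finset.mem_filter.1 hx.2).2.1, hx.1⟩
    have := Finset.card_le_card hsub
    rw [Finset.card_erase_of_mem hu, h3] at this
    simp only [hu, if_true]
    omega
  · have := Finset.card_le_card (Finset.inter_subset_left : e ∩ hNbhd E u ⊆ e)
    simp only [hu, if_false, not_false_eq_true, true_and]
    split_ifs <;> omega

/-- In a connected linear 3-uniform Berge-`C_l`-free hypergraph (`l ≥ 5`) on `n`
vertices, `Σ_{v ∈ N_u} d_v ≤ (2l-7)(n-1)/2 + 2(2l-3)·d_u`. -/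
theorem sum_deg_nbhd_bound {V : Type*} [Fintype V] [DecidableEq V]
    (E : Finset (Finset V)) (l : ℕ) (hl : 5 ≤ l)
    (hunif : ∀ e ∈ E, e.card = 3)
    (hlin : ∀ e ∈ E, ∀ f ∈ E, e ≠ f → (e ∩ f).card ≤ 1)
    (hconn : ∀ u v : V, Relation.ReflTransGen (fun a b => ∃ e ∈ E, a ∈ e ∧ b ∈ e) u v)
    (hfree : BergeCycleFree E l) (u : V) :
    (∑ v ∈ hNbhd E u, (hDeg E v : ℝ))
      ≤ (2 * (l : ℝ) - 7) * ((Fintype.card V : ℝ) - 1) / 2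
        + 2 * (2 * (l : ℝ) - 3) * (hDeg E u : ℝ) := by
  have h0 := sum_hDeg_nbhd_le E hunif u
  have h2 := two_mul_card_edges_two_le E l hl hunif hlin hfree u
  have h1 := two_mul_card_edges_one_le E l hl hunif hlin hfree u
  have hS := card_nbhd_le E hunif u
  have hX : ((Finset.univ \ hNbhd E u).erase u).card + (hNbhd E u).card + 1 = Fintype.card V := by
    have hu : u ∈ Finset.univ \ hNbhd E u := by simp [hNbhd]
    have h := Finset.card_erase_add_one hu
    have h' := Finset.card_sdiff_add_card_eq_card (Finset.subset_univ (hNbhd E u))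
    rw [Finset.card_univ] at h'
    omega
  rw [← Nat.cast_sum]
  rify at h0 h2 h1 hS hX
  rw [Nat.cast_sub (by omega)] at h1 h2
  push_cast at h0 h1 h2 ⊢
  have hl' : (5 : ℝ) ≤ l := by exact_mod_cast hl
  rw [← hX]
  -- the total coefficient of `|N_u|` is `2 * l - 4`, so only its upper bound `2 * d_u` is needed
  nlinarith [mul_le_mul_of_nonneg_left hS (by linarith : (0 : ℝ) ≤ 2 * l - 4)]
end
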